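/- arXiv:math/9712238 — 2 statements merged into one kernel-verified Lean document; each statement's English description precedes it below -/
import Mathlib

section
/- For all real numbers u, q, x with q > 1, 0 < u < 1 and |x| ≤ 1, the sum over all partitions λ of all nonnegative integers of x^{|λ|}·M_{(u,q)}(λ) converges and equals the convergent infinite product ∏_{r=1}^∞ (1 − u/q^r)/(1 − u·x/q^r). -/
open scoped BigOperators

/-- The "order of `GL(m,q)`" for a real parameter `q`:
`|GL(m,q)| = q^(m(m-1)/2) * ∏_{j=1}^m (q^j - 1)`. -/
noncomputable def glOrder (q : ℝ) (m : ℕ) : ℝ :=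
  q ^ (m * (m - 1) / 2) * ∏ j ∈ Finset.range m, (q ^ (j + 1) - 1)

/-- The measure `M_{(u,q)}` on the set of all partitions of all nonnegative integers. -/
noncomputable def measureM (u q : ℝ) (lam : Σ n : ℕ, Nat.Partition n) : ℝ :=
  (∏' r : ℕ, (1 - u / q ^ (r + 1))) * u ^ lam.1 /
    (q ^ (2 * ∑ i ∈ Finset.range (lam.1 + 1), ∑ h ∈ Finset.range i,
            h * lam.2.parts.count h * lam.2.parts.count i
        + ∑ i ∈ Finset.range (lam.1 + 1), (i - 1) * lam.2.parts.count i ^ 2) *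
      ∏ i ∈ Finset.range (lam.1 + 1), glOrder q (lam.2.parts.count i))

/-!
Put `p = 1/q` and `t = ux`. Since `|GL(m,q)| = q^(m²) (p; p)_m`, the claim is
`Σ_λ w(λ) = 1 / (tp; p)_∞` for the weight `w(λ) = t^|λ| p^(Σ_j (λ'_j)²) / ∏_i (p; p)_{m_i(λ)}`.

Extend `w` to multisets of natural numbers, zeros allowed (`weight`), and let `S N` be the sum of the
weights of the multisets with `N` elements. Such a multiset consists of `N - l` zeros and a multiset
with `l` elements raised by one, and raising by one adds a column of length `l` to the partition
(`weight_addColumn`). Hence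
`S N = Σ_{l ≤ N} t^l p^(l²) S l / (p; p)_{N-l}`.
The numbers `1 / ((p; p)_N (tp; p)_N)` (`layer`) satisfy the same recursion (`layer_rec`, by induction
on `N` with `t` varying), and the recursion has only one solution with `S 0 = 1` (`hasSum_layer`).
Absolute convergence comes from applying the recursion, for `|t|`, to multisets with bounded
elements: their sums stay below the fixed point (`truncSum_le`).

Partitions correspond to arbitrary multisets raised by one, so the total is
`Σ_l t^l p^(l²) / ((p; p)_l (tp; p)_l)`. Multiplying the recursion for `layer` by `(p; p)_N` and
letting `N → ∞`, by dominated convergence, evaluates this as `1 / (tp; p)_∞` (`cauchy`).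
-/

/-! ### Finite products and the finite form of Cauchy's identity -/

/-- The finite product `(ap; p)_n = ∏_{r=1}^n (1 - a p^r)`. -/
noncomputable def poch (p a : ℝ) (n : ℕ) : ℝ := ∏ i ∈ Finset.range n, (1 - a * p ^ (i + 1))

lemma poch_zero (p a : ℝ) : poch p a 0 = 1 := by simp [poch]

lemma poch_succ (p a : ℝ) (n : ℕ) : poch p a (n + 1) = poch p a n * (1 - a * p ^ (n + 1)) := by
  simp [poch, Finset.prod_range_succ]

lemma poch_succ' (p a : ℝ) (n : ℕ) :
    poch p a (n + 1) = (1 - a * p) * poch p (a * p) n := by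
  rw [poch, Finset.prod_range_succ', poch, mul_comm]
  congr 1
  · simp
  · refine Finset.prod_congr rfl fun i _ => ?_
    ring

lemma factor_pos {p a : ℝ} (hp0 : 0 < p) (hp1 : p < 1) (ha : |a| ≤ 1) (i : ℕ) :
    0 < 1 - a * p ^ (i + 1) := by
  have h1 : p ^ (i + 1) < 1 := pow_lt_one₀ hp0.le hp1 (by simp)
  have h2 : 0 < p ^ (i + 1) := by positivity
  nlinarith [le_abs_self a]

lemma poch_pos {p a : ℝ} (hp0 : 0 < p) (hp1 : p < 1) (ha : |a| ≤ 1) (n : ℕ) :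
    0 < poch p a n := Finset.prod_pos fun i _ => factor_pos hp0 hp1 ha i

lemma poch_one_pos {p : ℝ} (hp0 : 0 < p) (hp1 : p < 1) (n : ℕ) : 0 < poch p 1 n :=
  poch_pos hp0 hp1 (by simp) n

lemma poch_one_le {p a : ℝ} (hp0 : 0 < p) (hp1 : p < 1) (ha : |a| ≤ 1) (n : ℕ) :
    poch p 1 n ≤ poch p a n := by
  refine Finset.prod_le_prod (fun i _ => (factor_pos hp0 hp1 (by simp) i).le) fun i _ => ?_
  have h2 : 0 < p ^ (i + 1) := by positivity
  nlinarith [le_abs_self a]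

lemma poch_le_one {p a : ℝ} (hp0 : 0 < p) (hp1 : p < 1) (ha0 : 0 ≤ a) (ha : a ≤ 1) (n : ℕ) :
    poch p a n ≤ 1 := by
  refine Finset.prod_le_one
    (fun i _ => (factor_pos hp0 hp1 (abs_le.2 ⟨by linarith, ha⟩) i).le) fun i _ => ?_
  have h2 : 0 < p ^ (i + 1) := by positivity
  nlinarith

/-- The closed form of the sum of `weight` over the multisets with `N` elements. -/
noncomputable def layer (p t : ℝ) (N : ℕ) : ℝ := 1 / (poch p 1 N * poch p t N)

/-- A finite form of Cauchy's identity. Split the factor `1 - p^(N+1)` as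
`p^l (1 - p^(N+1-l)) + (1 - p^l)`; after a shift of `l` in the second part the two sums combine
into the left-hand side for `N` and `t * p`. -/
lemma layer_rec {p t : ℝ} (hp0 : 0 < p) (hp1 : p < 1) (ht : |t| ≤ 1) (N : ℕ) :
    ∑ ij ∈ Finset.HasAntidiagonal.antidiagonal N,
      1 / poch p 1 ij.1 * (t ^ ij.2 * p ^ (ij.2 ^ 2) * layer p t ij.2) = layer p t N := by
  induction N generalizing t with
  | zero => simp [layer, poch_zero]
  | succ N ih =>
    have htp : |t * p| ≤ 1 := by
      rw [abs_mul, abs_of_pos hp0]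
      nlinarith [abs_nonneg t]
    have key : (1 - p ^ (N + 1)) * ∑ ij ∈ Finset.HasAntidiagonal.antidiagonal (N + 1),
        1 / poch p 1 ij.1 * (t ^ ij.2 * p ^ (ij.2 ^ 2) * layer p t ij.2)
        = 1 / (1 - t * p) * layer p (t * p) N := by
      have split : (1 - p ^ (N + 1)) * ∑ ij ∈ Finset.HasAntidiagonal.antidiagonal (N + 1),
          1 / poch p 1 ij.1 * (t ^ ij.2 * p ^ (ij.2 ^ 2) * layer p t ij.2)
          = ∑ ij ∈ Finset.HasAntidiagonal.antidiagonal (N + 1), (1 - p ^ ij.1) * p ^ ij.2 *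
            (1 / poch p 1 ij.1 * (t ^ ij.2 * p ^ (ij.2 ^ 2) * layer p t ij.2))
          + ∑ ij ∈ Finset.HasAntidiagonal.antidiagonal (N + 1), (1 - p ^ ij.2) *
            (1 / poch p 1 ij.1 * (t ^ ij.2 * p ^ (ij.2 ^ 2) * layer p t ij.2)) := by
        rw [Finset.mul_sum, ← Finset.sum_add_distrib]
        refine Finset.sum_congr rfl fun ij hij => ?_
        rw [← Finset.HasAntidiagonal.mem_antidiagonal.1 hij]
        ring
      rw [split, Finset.Nat.sum_antidiagonal_succ, Finset.Nat.sum_antidiagonal_succ', ← ih htp,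
        Finset.mul_sum]
      simp only [pow_zero, sub_self, zero_mul, zero_add]
      rw [← Finset.sum_add_distrib]
      refine Finset.sum_congr rfl fun ij _ => ?_
      obtain ⟨i, j⟩ := ij
      simp only [layer]
      have e1 := poch_succ p 1 i
      have e2 := poch_succ p 1 j
      have e3 := poch_succ p t j
      have e4 := poch_succ' p t j
      have n1 := (poch_one_pos hp0 hp1 i).ne'
      have n2 := (poch_one_pos hp0 hp1 j).ne'
      have n3 := (poch_pos hp0 hp1 ht j).ne'
      have n4 := (poch_pos hp0 hp1 htp j).ne'
      have f1 := (factor_pos hp0 hp1 (a := 1) (by simp) i).ne'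
      have f2 := (factor_pos hp0 hp1 (a := 1) (by simp) j).ne'
      have f3 := (factor_pos hp0 hp1 ht j).ne'
      have f4 : 1 - t * p ≠ 0 := by simpa using (factor_pos hp0 hp1 ht 0).ne'
      have e5 : poch p (t * p) j = poch p t j * (1 - t * p ^ (j + 1)) / (1 - t * p) := by
        rw [← e3, e4]
        field_simp
      rw [e1, e2, e3, e5]
      have f5 : 1 - p ^ (j + 1) * t ≠ 0 := by rwa [mul_comm]
      simp only [one_mul] at f1 f2 ⊢
      field_simp
      ring
    have f2 := (factor_pos hp0 hp1 (a := 1) (by simp) N).ne'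
    rw [one_mul] at f2
    have hl : (1 - p ^ (N + 1)) * layer p t (N + 1) = 1 / (1 - t * p) * layer p (t * p) N := by
      rw [layer, layer, poch_succ' p t, poch_succ p 1, one_mul]
      have n1 := (poch_one_pos hp0 hp1 N).ne'
      have n4 := (poch_pos hp0 hp1 htp N).ne'
      have f4 : 1 - t * p ≠ 0 := by simpa using (factor_pos hp0 hp1 ht 0).ne'
      field_simp
    exact mul_left_cancel₀ f2 (key.trans hl.symm)

/-! ### Weights of multisets -/

/-- The exponent `Σ_{j ≥ 1} (λ'_j)²` in terms of the multiplicities `c i = m_i(λ)`, `i < K`. -/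
def expo (K : ℕ) (c : ℕ → ℕ) : ℕ :=
  2 * ∑ i ∈ Finset.range K, ∑ h ∈ Finset.range i, h * c h * c i
    + ∑ i ∈ Finset.range K, i * c i ^ 2

/-- The weight `t^(Σ i c_i) p^(expo c) / ∏_i (p; p)_{c_i}` of a family of multiplicities `c i`,
`i < K`. -/
noncomputable def wt (p t : ℝ) (K : ℕ) (c : ℕ → ℕ) : ℝ :=
  t ^ (∑ i ∈ Finset.range K, i * c i) * p ^ expo K c /
    ∏ i ∈ Finset.range K, poch p 1 (c i)

/-- The weight of a multiset of natural numbers, regarded as a partition which may have parts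
equal to zero; the zero parts contribute the factor `1 / (p; p)_{m_0}`. -/
noncomputable def weight (p t : ℝ) (s : Multiset ℕ) : ℝ :=
  wt p t (s.sum + 1) fun i => s.count i

/-- The multiset obtained from `s` by increasing all elements by one and adding `a` zeros. -/
def addColumn (a : ℕ) (s : Multiset ℕ) : Multiset ℕ :=
  Multiset.replicate a 0 + s.map Nat.succ

lemma wt_mono (p t : ℝ) {c : ℕ → ℕ} {K L : ℕ} (hKL : K ≤ L) (hc : ∀ i, K ≤ i → c i = 0) :
    wt p t L c = wt p t K c := by
  induction L, hKL using Nat.le_induction with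
  | base => rfl
  | succ L hL ih =>
    rw [← ih]
    simp [wt, expo, Finset.sum_range_succ, Finset.prod_range_succ, hc L hL, poch_zero]

lemma weight_eq (p t : ℝ) {s : Multiset ℕ} {K : ℕ} (hs : ∀ x ∈ s, x < K) :
    weight p t s = wt p t K fun i => s.count i := by
  have h1 : ∀ i, K ≤ i → s.count i = 0 := fun i hi =>
    Multiset.count_eq_zero.2 fun h => (hs i h).not_ge hi
  have h2 : ∀ i, s.sum + 1 ≤ i → s.count i = 0 := fun i hi =>
    Multiset.count_eq_zero.2 fun h => by
      have := Multiset.single_le_sum (fun _ _ => Nat.zero_le _) i h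
      omega
  rcases le_total K (s.sum + 1) with h | h
  · exact wt_mono p t h h1
  · exact (wt_mono p t h h2).symm

lemma sq_sum_eq (K : ℕ) (c : ℕ → ℕ) :
    (∑ i ∈ Finset.range K, c i) ^ 2 =
      2 * ∑ i ∈ Finset.range K, ∑ h ∈ Finset.range i, c h * c i
        + ∑ i ∈ Finset.range K, c i ^ 2 := by
  induction K with
  | zero => simp
  | succ K ih =>
    simp only [Finset.sum_range_succ]
    rw [add_sq, ih, ← Finset.sum_mul]
    ring

lemma expo_succ (K : ℕ) (c : ℕ → ℕ) :
    expo (K + 1) c = expo K (fun i => c (i + 1)) + (∑ i ∈ Finset.range K, c (i + 1)) ^ 2 := by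
  rw [sq_sum_eq]
  simp only [expo, Finset.sum_range_succ', Finset.range_zero, Finset.sum_empty, zero_mul,
    add_zero, add_mul, one_mul, Finset.sum_add_distrib]
  ring

lemma wt_succ (p t : ℝ) (K : ℕ) (c : ℕ → ℕ) :
    wt p t (K + 1) c = 1 / poch p 1 (c 0) *
      (t ^ (∑ i ∈ Finset.range K, c (i + 1)) * p ^ ((∑ i ∈ Finset.range K, c (i + 1)) ^ 2) *
        wt p t K fun i => c (i + 1)) := by
  simp only [wt, expo_succ, Finset.prod_range_succ']
  rw [Finset.sum_range_succ']
  simp only [add_mul, one_mul, zero_mul, add_zero, Finset.sum_add_distrib, pow_add]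
  rw [div_eq_mul_inv, div_eq_mul_inv, mul_inv]
  ring

lemma count_zero_addColumn (a : ℕ) (s : Multiset ℕ) : (addColumn a s).count 0 = a := by
  simp [addColumn]

lemma count_succ_addColumn (a : ℕ) (s : Multiset ℕ) (i : ℕ) :
    (addColumn a s).count (i + 1) = s.count i := by
  have := Multiset.count_map_eq_count' Nat.succ s Nat.succ_injective i
  simpa [addColumn, Multiset.count_replicate] using this

lemma card_addColumn (a : ℕ) (s : Multiset ℕ) : (addColumn a s).card = a + s.card := by
  simp [addColumn]

lemma addColumn_lt_iff (a : ℕ) (s : Multiset ℕ) (K : ℕ) :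
    (∀ x ∈ addColumn a s, x < K + 1) ↔ ∀ x ∈ s, x < K := by
  constructor
  · intro h x hx
    have := h (x + 1) (by simp [addColumn, hx])
    omega
  · intro h x hx
    rcases Multiset.mem_add.1 hx with h1 | h1
    · rw [Multiset.eq_of_mem_replicate h1]
      omega
    · obtain ⟨y, hy, rfl⟩ := Multiset.mem_map.1 h1
      exact Nat.succ_lt_succ (h y hy)

/-- The effect on weights of adding a first column of length `s.card` and `a` zero parts. -/
lemma weight_addColumn (p t : ℝ) (a : ℕ) (s : Multiset ℕ) :
    weight p t (addColumn a s) =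
      1 / poch p 1 a * (t ^ s.card * p ^ (s.card ^ 2) * weight p t s) := by
  have hs : ∀ x ∈ s, x < s.sum + 1 := fun x hx =>
    Nat.lt_succ_of_le (Multiset.single_le_sum (fun _ _ => Nat.zero_le _) x hx)
  rw [weight_eq p t ((addColumn_lt_iff a s _).2 hs), weight_eq p t hs, wt_succ]
  simp only [count_zero_addColumn, count_succ_addColumn]
  rw [Multiset.sum_count_eq_card fun x hx => Finset.mem_range.2 (hs x hx)]

lemma addColumn_bijective :
    Function.Bijective fun x : ℕ × Multiset ℕ => addColumn x.1 x.2 := by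
  constructor
  · rintro ⟨a, s⟩ ⟨b, r⟩ h
    simp only at h
    have h0 : a = b := by
      rw [← count_zero_addColumn a s, h, count_zero_addColumn]
    have h1 : s = r := Multiset.ext.2 fun i => by
      rw [← count_succ_addColumn a s, h, count_succ_addColumn]
    rw [h0, h1]
  · intro s
    refine ⟨(s.count 0, (s.filter (0 < ·)).map Nat.pred), ?_⟩
    have h : ((s.filter (0 < ·)).map Nat.pred).map Nat.succ = s.filter (0 < ·) := by
      rw [Multiset.map_map]
      conv_rhs => rw [← Multiset.map_id (s.filter (0 < ·))]
      exact Multiset.map_congr rfl fun x hx => Nat.succ_pred_eq_of_pos (Multiset.mem_filter.1 hx).2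
    simp only [addColumn]
    rw [h, ← Multiset.filter_eq' s 0]
    have h2 : s.filter (0 < ·) = s.filter fun x => ¬ x = 0 :=
      Multiset.filter_congr fun x _ => Nat.pos_iff_ne_zero
    rw [h2, Multiset.filter_add_not]

/-! ### Summation over multisets of fixed cardinality -/

/-- The recursion obtained from removing the first column: sums over multisets with `N` elements
in `P'` in terms of sums over multisets with at most `N` elements in `P`. -/
lemma hasSum_addColumn (p t : ℝ) {P P' : Set (Multiset ℕ)}
    (hP : ∀ a s, addColumn a s ∈ P' ↔ s ∈ P) {σ : ℕ → ℝ}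
    (h : ∀ l, HasSum (({s | s.card = l} ∩ P).indicator (weight p t)) (σ l)) (N : ℕ) :
    HasSum (({s | s.card = N} ∩ P').indicator (weight p t))
      (∑ ij ∈ Finset.HasAntidiagonal.antidiagonal N,
        1 / poch p 1 ij.1 * (t ^ ij.2 * p ^ (ij.2 ^ 2) * σ ij.2)) := by
  classical
  rw [← (Equiv.ofBijective _ addColumn_bijective).hasSum_iff]
  have h1 : ∀ ij ∈ Finset.HasAntidiagonal.antidiagonal N,
      HasSum (fun x : ℕ × Multiset ℕ => if x.1 = ij.1 then
        1 / poch p 1 ij.1 * (t ^ ij.2 * p ^ (ij.2 ^ 2) *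
          ({s : Multiset ℕ | s.card = ij.2} ∩ P).indicator (weight p t) x.2) else 0)
        (1 / poch p 1 ij.1 * (t ^ ij.2 * p ^ (ij.2 ^ 2) * σ ij.2)) := by
    intro ij _
    refine ((Prod.mk_right_injective ij.1).hasSum_iff ?_).1 ?_
    · rintro ⟨a, s⟩ hx
      refine if_neg fun hh => hx ⟨s, ?_⟩
      simp only at hh
      rw [hh]
    · simpa [Function.comp_def] using ((h ij.2).mul_left _).mul_left (1 / poch p 1 ij.1)
  convert hasSum_sum h1 using 1
  funext x
  obtain ⟨a, s⟩ := x
  simp only [Function.comp_apply, Equiv.ofBijective_apply]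
  by_cases hs : a + s.card = N ∧ s ∈ P
  · rw [Finset.sum_eq_single (a, s.card)]
    · rw [Set.indicator_of_mem (by simp [card_addColumn, hP, hs.1, hs.2]), if_pos rfl,
        Set.indicator_of_mem (by simp [hs.2]), weight_addColumn]
    · rintro ⟨i, j⟩ hij hne
      refine ite_eq_right_iff.2 fun hi => ?_
      have hj : s.card ≠ j := fun hj => hne (by simp_all)
      simp [hj]
    · intro hn
      exact absurd (Finset.HasAntidiagonal.mem_antidiagonal.2 hs.1) hn
  · rw [Set.indicator_of_notMem (by simpa [card_addColumn, hP] using hs)]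
    refine (Finset.sum_eq_zero ?_).symm
    rintro ⟨i, j⟩ hij
    refine ite_eq_right_iff.2 fun hi => ?_
    rw [Set.indicator_of_notMem, mul_zero, mul_zero]
    rintro ⟨h2, h3⟩
    simp only [Set.mem_ofPred_eq] at h2 hi
    exact hs ⟨by rw [h2, hi]; exact Finset.HasAntidiagonal.mem_antidiagonal.1 hij, h3⟩

lemma weight_zero (p t : ℝ) : weight p t 0 = 1 := by
  simp [weight, wt, expo, poch_zero]

/-- The sum of `weight` over the multisets with `N` elements, all of them less than `K`. -/
noncomputable def truncSum (p t : ℝ) : ℕ → ℕ → ℝ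
  | 0, N => if N = 0 then 1 else 0
  | K + 1, N => ∑ ij ∈ Finset.HasAntidiagonal.antidiagonal N,
      1 / poch p 1 ij.1 * (t ^ ij.2 * p ^ (ij.2 ^ 2) * truncSum p t K ij.2)

lemma hasSum_truncSum (p t : ℝ) (K N : ℕ) :
    HasSum (({s | s.card = N} ∩ {s | ∀ x ∈ s, x < K}).indicator (weight p t))
      (truncSum p t K N) := by
  classical
  induction K generalizing N with
  | zero =>
    have h := hasSum_single
      (f := ({s : Multiset ℕ | s.card = N} ∩ {s | ∀ x ∈ s, x < 0}).indicator (weight p t)) 0 ?_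
    · convert h using 1
      by_cases hN : N = 0
      · simp [truncSum, hN, weight_zero]
      · simp [truncSum, hN, Ne.symm hN]
    · intro s hs
      refine Set.indicator_of_notMem (fun hh => hs ?_) _
      exact Multiset.eq_zero_of_forall_notMem fun x hx => Nat.not_lt_zero x (hh.2 x hx)
  | succ K ih =>
    exact hasSum_addColumn p t (P := {s | ∀ x ∈ s, x < K})
      (P' := {s | ∀ x ∈ s, x < K + 1}) (fun a s => addColumn_lt_iff a s K) ih N

lemma layer_pos {p t : ℝ} (hp0 : 0 < p) (hp1 : p < 1) (ht : |t| ≤ 1) (N : ℕ) :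
    0 < layer p t N :=
  one_div_pos.2 (mul_pos (poch_one_pos hp0 hp1 N) (poch_pos hp0 hp1 ht N))

lemma truncSum_le {p t : ℝ} (hp0 : 0 < p) (hp1 : p < 1) (ht0 : 0 ≤ t) (ht : |t| ≤ 1) (K N : ℕ) :
    truncSum p t K N ≤ layer p t N := by
  induction K generalizing N with
  | zero =>
    rcases N with _ | N
    · simp [truncSum, layer, poch_zero]
    · simpa [truncSum] using (layer_pos hp0 hp1 ht _).le
  | succ K ih =>
    rw [← layer_rec hp0 hp1 ht, truncSum]
    refine Finset.sum_le_sum fun ij _ => ?_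
    have := poch_one_pos hp0 hp1 ij.1
    have := ih ij.2
    gcongr

lemma weight_nonneg {p t : ℝ} (hp0 : 0 < p) (hp1 : p < 1) (ht0 : 0 ≤ t) (s : Multiset ℕ) :
    0 ≤ weight p t s :=
  div_nonneg (by positivity) (Finset.prod_nonneg fun _ _ => (poch_one_pos hp0 hp1 _).le)

lemma abs_weight {p t : ℝ} (hp0 : 0 < p) (hp1 : p < 1) (s : Multiset ℕ) :
    |weight p t s| = weight p |t| s := by
  rw [weight, wt, abs_div, abs_mul, abs_pow, abs_of_pos (pow_pos hp0 _),
    abs_of_pos (Finset.prod_pos fun _ _ => poch_one_pos hp0 hp1 _)]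
  rfl

lemma summable_layer {p t : ℝ} (hp0 : 0 < p) (hp1 : p < 1) (ht : |t| ≤ 1) (N : ℕ) :
    Summable ({s : Multiset ℕ | s.card = N}.indicator (weight p t)) := by
  have main : Summable ({s : Multiset ℕ | s.card = N}.indicator (weight p |t|)) := by
    have ht' : |(|t|)| ≤ 1 := by rwa [abs_abs]
    have hw := weight_nonneg hp0 hp1 (abs_nonneg t)
    refine summable_of_sum_le (c := layer p |t| N) (fun s => Set.indicator_nonneg (fun _ _ => hw _) s)
      fun F => ?_
    -- a finite family of multisets has a common bound for the elements of its members
    set K := (F.sup fun s => s.sum) + 1 with hK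
    refine le_trans ?_ ((sum_le_hasSum F (fun s _ => Set.indicator_nonneg (fun _ _ => hw _) s)
      (hasSum_truncSum p |t| K N)).trans (truncSum_le hp0 hp1 (abs_nonneg t) ht' K N))
    refine Finset.sum_le_sum fun s hs => le_of_eq ?_
    have hsK : ∀ x ∈ s, x < K := fun x hx => by
      have h1 := Multiset.single_le_sum (fun _ _ => Nat.zero_le _) x hx
      have h2 : s.sum ≤ F.sup fun s => s.sum := Finset.le_sup (f := fun s : Multiset ℕ => s.sum) hs
      omega
    by_cases hc : s.card = N
    · rw [Set.indicator_of_mem (by exact hc),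
        Set.indicator_of_mem (Set.mem_inter (by exact hc) (by exact hsK))]
    · rw [Set.indicator_of_notMem (by exact hc), Set.indicator_of_notMem fun h => hc h.1]
  refine Summable.of_norm ?_
  convert main using 2 with s
  rw [Real.norm_eq_abs]
  by_cases hc : s.card = N
  · rw [Set.indicator_of_mem (by exact hc), Set.indicator_of_mem (by exact hc),
      abs_weight hp0 hp1]
  · rw [Set.indicator_of_notMem (by exact hc), Set.indicator_of_notMem (by exact hc), abs_zero]

/-- The sums over multisets with `N` elements satisfy the same recursion as `layer`, and the
recursion has a unique solution with given value at `N = 0`, because the coefficient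
`t^N p^(N²)` of the `N`-th unknown on the right is not `1` for `N > 0`. -/
lemma hasSum_layer {p t : ℝ} (hp0 : 0 < p) (hp1 : p < 1) (ht : |t| ≤ 1) (N : ℕ) :
    HasSum ({s : Multiset ℕ | s.card = N}.indicator (weight p t)) (layer p t N) := by
  classical
  set σ : ℕ → ℝ := fun N => ∑' s, {s : Multiset ℕ | s.card = N}.indicator (weight p t) s with hσ
  have hs : ∀ N, HasSum ({s : Multiset ℕ | s.card = N}.indicator (weight p t)) (σ N) :=
    fun N => (summable_layer hp0 hp1 ht N).hasSum
  have hrec : ∀ N, σ N = ∑ ij ∈ Finset.HasAntidiagonal.antidiagonal N,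
        1 / poch p 1 ij.1 * (t ^ ij.2 * p ^ (ij.2 ^ 2) * σ ij.2) := fun N => by
    have := hasSum_addColumn p t (P := Set.univ) (P' := Set.univ) (fun a s => by simp)
      (σ := σ) (fun l => by simpa using hs l) N
    rw [Set.inter_univ] at this
    exact (hs N).unique this
  suffices h : σ N = layer p t N from h ▸ hs N
  induction N using Nat.strong_induction_on with
  | _ N ih =>
  rcases N with _ | N
  · have h := hasSum_single
      (f := {s : Multiset ℕ | s.card = 0}.indicator (weight p t)) (0 : Multiset ℕ) ?_
    · rw [(hs 0).unique h]
      simp [layer, poch_zero, weight_zero]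
    · intro s hs
      refine Set.indicator_of_notMem (fun hh => hs ?_) _
      exact Multiset.card_eq_zero.1 hh
  · have h1 := hrec (N + 1)
    have h2 := layer_rec hp0 hp1 ht (N + 1)
    rw [Finset.Nat.sum_antidiagonal_succ] at h1 h2
    have h3 : ∑ ij ∈ Finset.HasAntidiagonal.antidiagonal N,
        1 / poch p 1 (ij.1 + 1) * (t ^ ij.2 * p ^ (ij.2 ^ 2) * σ ij.2) =
        ∑ ij ∈ Finset.HasAntidiagonal.antidiagonal N,
        1 / poch p 1 (ij.1 + 1) * (t ^ ij.2 * p ^ (ij.2 ^ 2) * layer p t ij.2) := by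
      refine Finset.sum_congr rfl fun ij hij => ?_
      have := Finset.HasAntidiagonal.mem_antidiagonal.1 hij
      rw [ih ij.2 (by omega)]
    rw [h3] at h1
    simp only [poch_zero, div_one, one_mul] at h1 h2
    have h4 : t ^ (N + 1) * p ^ ((N + 1) ^ 2) < 1 := by
      have e1 : |t ^ (N + 1)| ≤ 1 := by
        rw [abs_pow]
        exact pow_le_one₀ (abs_nonneg t) ht
      have e2 : p ^ ((N + 1) ^ 2) < 1 := pow_lt_one₀ hp0.le hp1 (by positivity)
      have e3 : 0 < p ^ ((N + 1) ^ 2) := by positivity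
      nlinarith [le_abs_self (t ^ (N + 1))]
    have h5 : (1 - t ^ (N + 1) * p ^ ((N + 1) ^ 2)) * (σ (N + 1) - layer p t (N + 1)) = 0 := by
      linarith
    rcases mul_eq_zero.1 h5 with h | h
    · linarith
    · linarith

/-! ### Infinite products and Cauchy's identity -/

lemma hasProd_poch {p a : ℝ} (hp0 : 0 < p) (hp1 : p < 1) (ha : |a| ≤ 1) :
    ∃ Q, Q ≠ 0 ∧ HasProd (fun r : ℕ => 1 - a * p ^ (r + 1)) Q ∧
      Filter.Tendsto (poch p a) Filter.atTop (nhds Q) := by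
  have hsum : Summable fun r : ℕ => ‖-(a * p ^ (r + 1))‖ := by
    have : Summable fun r : ℕ => |a| * p * p ^ r :=
      (summable_geometric_of_lt_one hp0.le hp1).mul_left _
    convert this using 2 with r
    rw [norm_neg, Real.norm_eq_abs, abs_mul, abs_of_pos (pow_pos hp0 _)]
    ring
  have h1 : HasProd (fun r : ℕ => 1 - a * p ^ (r + 1)) (∏' r : ℕ, (1 + -(a * p ^ (r + 1)))) := by
    simpa only [sub_eq_add_neg] using (multipliable_one_add_of_summable hsum).hasProd
  refine ⟨_, ?_, h1, h1.tendsto_prod_nat⟩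
  refine tprod_one_add_ne_zero_of_summable (fun i => ?_) hsum
  rw [← sub_eq_add_neg]
  exact (factor_pos hp0 hp1 ha i).ne'

/-- The products `(p; p)_l` are bounded below by their positive limit, whence a geometric bound for
the terms of Cauchy's sum. -/
lemma exists_layer_le {p t : ℝ} (hp0 : 0 < p) (hp1 : p < 1) (ht : |t| ≤ 1) :
    ∃ C, ∀ l, |t ^ l * p ^ (l ^ 2) * layer p t l| ≤ C * |t| ^ l := by
  obtain ⟨Q, hQ, -, hlim⟩ := hasProd_poch hp0 hp1 (a := 1) (by simp)
  have hanti : Antitone (poch p 1) := antitone_nat_of_succ_le fun n => by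
    rw [poch_succ]
    have h1 := poch_one_pos hp0 hp1 n
    have h2 : 0 < p ^ (n + 1) := by positivity
    nlinarith
  have hQ0 : 0 < Q := lt_of_le_of_ne
    (ge_of_tendsto' hlim fun n => (poch_one_pos hp0 hp1 n).le) hQ.symm
  have hle : ∀ n, Q ≤ poch p 1 n := fun n => hanti.le_of_tendsto hlim n
  refine ⟨1 / (Q * Q), fun l => ?_⟩
  rw [abs_mul, abs_mul, abs_pow, abs_of_pos (pow_pos hp0 _), abs_of_pos (layer_pos hp0 hp1 ht l)]
  have h1 : layer p t l ≤ 1 / (Q * Q) := by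
    have := (hle l).trans (poch_one_le hp0 hp1 ht l)
    have := hle l
    rw [layer]
    exact one_div_le_one_div_of_le (mul_pos hQ0 hQ0)
      (mul_le_mul this ‹_› hQ0.le (poch_one_pos hp0 hp1 l).le)
  have h2 : p ^ (l ^ 2) ≤ 1 := pow_le_one₀ hp0.le hp1.le
  have h3 := layer_pos hp0 hp1 ht l
  calc |t| ^ l * p ^ (l ^ 2) * layer p t l ≤ |t| ^ l * 1 * (1 / (Q * Q)) := by gcongr
    _ = _ := by ring

/-- Cauchy's identity `Σ_l t^l p^(l²) / ((p; p)_l (tp; p)_l) = 1 / (tp; p)_∞`, as the limit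
`N → ∞` of its finite form. -/
lemma cauchy {p t Q : ℝ} (hp0 : 0 < p) (hp1 : p < 1) (ht : |t| < 1) (hQ : Q ≠ 0)
    (hlim : Filter.Tendsto (poch p t) Filter.atTop (nhds Q)) :
    HasSum (fun l : ℕ => t ^ l * p ^ (l ^ 2) * layer p t l) (1 / Q) := by
  obtain ⟨C, hC⟩ := exists_layer_le hp0 hp1 ht.le
  have hgeo : Summable fun l : ℕ => C * |t| ^ l :=
    (summable_geometric_of_lt_one (abs_nonneg t) ht).mul_left C
  have hsum : Summable fun l : ℕ => t ^ l * p ^ (l ^ 2) * layer p t l :=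
    Summable.of_norm_bounded hgeo hC
  obtain ⟨Q1, hQ1, -, hlim1⟩ := hasProd_poch hp0 hp1 (a := 1) (by simp)
  set f : ℕ → ℕ → ℝ := fun N l => if l ≤ N then
    poch p 1 N / poch p 1 (N - l) * (t ^ l * p ^ (l ^ 2) * layer p t l) else 0 with hf
  have key : Filter.Tendsto (fun N => ∑' l, f N l) Filter.atTop
      (nhds (∑' l : ℕ, t ^ l * p ^ (l ^ 2) * layer p t l)) := by
    refine tendsto_tsum_of_dominated_convergence hgeo (fun l => ?_) ?_
    · have h1 : Filter.Tendsto (fun N => poch p 1 N / poch p 1 (N - l) *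
          (t ^ l * p ^ (l ^ 2) * layer p t l)) Filter.atTop
          (nhds (Q1 / Q1 * (t ^ l * p ^ (l ^ 2) * layer p t l))) :=
        (hlim1.div (hlim1.comp (Filter.tendsto_sub_atTop_nat l)) hQ1).mul_const _
      rw [div_self hQ1, one_mul] at h1
      refine h1.congr' ?_
      filter_upwards [Filter.eventually_ge_atTop l] with N hN
      simp [hf, hN]
    · refine Filter.Eventually.of_forall fun N l => ?_
      by_cases h : l ≤ N
      · simp only [hf, if_pos h]
        have hmono : poch p 1 N / poch p 1 (N - l) ≤ 1 := by
          have hanti : Antitone (poch p 1) := antitone_nat_of_succ_le fun n => by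
            rw [poch_succ]
            have h1 := poch_one_pos hp0 hp1 n
            have h2 : 0 < p ^ (n + 1) := by positivity
            nlinarith
          exact (div_le_one (poch_one_pos hp0 hp1 _)).2 (hanti (Nat.sub_le N l))
        rw [norm_mul, Real.norm_eq_abs, Real.norm_eq_abs,
          abs_of_pos (div_pos (poch_one_pos hp0 hp1 _) (poch_one_pos hp0 hp1 _))]
        exact (mul_le_of_le_one_left (abs_nonneg _) hmono).trans (hC l)
      · simp only [hf, if_neg h, norm_zero]
        exact (abs_nonneg _).trans (hC l)
  have hval : ∀ N, ∑' l, f N l = 1 / poch p t N := fun N => by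
    rw [tsum_eq_sum (s := Finset.range (N + 1)) fun l hl => if_neg fun h =>
      hl (Finset.mem_range.2 (Nat.lt_succ_of_le h))]
    have h1 := layer_rec hp0 hp1 ht.le N
    rw [← Finset.Nat.sum_antidiagonal_swap, Finset.Nat.sum_antidiagonal_eq_sum_range_succ_mk] at h1
    simp only [Prod.fst_swap, Prod.snd_swap] at h1
    have h2 : 1 / poch p t N = poch p 1 N * layer p t N := by
      have := (poch_one_pos hp0 hp1 N).ne'
      rw [layer]
      field_simp
    rw [h2, ← h1, Finset.mul_sum]
    refine Finset.sum_congr rfl fun l hl => ?_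
    simp only [if_pos (Nat.lt_succ_iff.1 (Finset.mem_range.1 hl))]
    ring
  simp only [hval] at key
  have h3 : Filter.Tendsto (fun N => 1 / poch p t N) Filter.atTop (nhds (1 / Q)) :=
    tendsto_const_nhds.div hlim hQ
  rw [tendsto_nhds_unique h3 key]
  exact hsum.hasSum

/-! ### Summation over partitions -/

/-- Sum over all partitions, each encoded by the multiset of its parts diminished by one. -/
lemma hasSum_all {p t Q : ℝ} (hp0 : 0 < p) (hp1 : p < 1) (ht : |t| < 1) (hQ : Q ≠ 0)
    (hlim : Filter.Tendsto (poch p t) Filter.atTop (nhds Q)) :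
    HasSum (fun s : Multiset ℕ => weight p t (addColumn 0 s)) (1 / Q) := by
  have fiber : ∀ r : ℝ, |r| ≤ 1 → ∀ N, HasSum (fun s : {s : Multiset ℕ // s.card = N} =>
      weight p r (addColumn 0 s.1)) (r ^ N * p ^ (N ^ 2) * layer p r N) := fun r hr N => by
    have h1 := (hasSum_subtype_iff_indicator.2 (hasSum_layer hp0 hp1 hr N)).mul_left
      (r ^ N * p ^ (N ^ 2))
    refine h1.congr_fun ?_
    rintro ⟨s, hs⟩
    simp only [weight_addColumn, poch_zero, Function.comp_apply]
    rw [show s.card = N from hs]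
    ring
  rw [← (Equiv.sigmaFiberEquiv (Multiset.card (α := ℕ))).hasSum_iff]
  refine (cauchy hp0 hp1 ht hQ hlim).sigma_of_hasSum (fun N => fiber t ht.le N) ?_
  refine Summable.of_norm ?_
  have ht' : |(|t|)| < 1 := by rwa [abs_abs]
  obtain ⟨Q', hQ', -, hlim'⟩ := hasProd_poch hp0 hp1 ht'.le
  have h2 : Summable fun x : Σ N, {s : Multiset ℕ // s.card = N} =>
      weight p |t| (addColumn 0 x.2.1) := by
    refine (summable_sigma_of_nonneg fun x => weight_nonneg hp0 hp1 (abs_nonneg t) _).2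
      ⟨fun N => (fiber _ ht'.le N).summable, ?_⟩
    simp only [(fiber _ ht'.le _).tsum_eq]
    exact (cauchy hp0 hp1 ht' hQ' hlim').summable
  refine h2.congr fun x => ?_
  rw [Real.norm_eq_abs]
  exact (abs_weight hp0 hp1 _).symm

lemma map_succ_map_pred {n : ℕ} (l : Nat.Partition n) :
    (l.parts.map Nat.pred).map Nat.succ = l.parts := by
  rw [Multiset.map_map]
  conv_rhs => rw [← Multiset.map_id l.parts]
  exact Multiset.map_congr rfl fun x hx => Nat.succ_pred_eq_of_pos (l.parts_pos hx)

lemma pred_bijective :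
    Function.Bijective fun l : Σ n : ℕ, Nat.Partition n => l.2.parts.map Nat.pred := by
  constructor
  · rintro ⟨n, l⟩ ⟨m, k⟩ h
    simp only at h
    have h1 : l.parts = k.parts := by
      rw [← map_succ_map_pred l, h, map_succ_map_pred]
    obtain rfl : n = m := by rw [← l.parts_sum, h1, k.parts_sum]
    rw [Nat.Partition.ext h1]
  · intro s
    refine ⟨⟨_, ⟨s.map Nat.succ, ?_, rfl⟩⟩, ?_⟩
    · intro i hi
      obtain ⟨y, -, rfl⟩ := Multiset.mem_map.1 hi
      exact Nat.succ_pos y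
    · simp [Multiset.map_map]

lemma glOrder_eq {q : ℝ} (hq : 1 < q) (m : ℕ) :
    glOrder q m = q ^ (m ^ 2) * poch q⁻¹ 1 m := by
  have h0 : q ≠ 0 := by positivity
  induction m with
  | zero => simp [glOrder, poch_zero]
  | succ m ih =>
    have e : (m + 1) * (m + 1 - 1) / 2 = m * (m - 1) / 2 + m := by
      rw [← Finset.sum_range_id, ← Finset.sum_range_id, Finset.sum_range_succ]
    rw [glOrder, Finset.prod_range_succ, e, pow_add, poch_succ]
    have h1 : q ^ (m * (m - 1) / 2) * ∏ j ∈ Finset.range m, (q ^ (j + 1) - 1) =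
      q ^ (m ^ 2) * poch q⁻¹ 1 m := ih
    calc _ = (q ^ (m * (m - 1) / 2) * ∏ j ∈ Finset.range m, (q ^ (j + 1) - 1)) *
          (q ^ m * (q ^ (m + 1) - 1)) := by ring
      _ = _ := by
        rw [h1]
        have e2 : (m + 1) ^ 2 = m ^ 2 + m + (m + 1) := by ring
        rw [e2, pow_add, pow_add, inv_pow]
        field_simp
        ring

/-- The measure in terms of `weight`: the powers of `q` in the denominator and those in `|GL(m,q)|`
combine to `q^(Σ_j (λ'_j)²)`. -/
lemma measureM_eq {q : ℝ} (hq : 1 < q) (u x : ℝ) (l : Σ n : ℕ, Nat.Partition n) :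
    x ^ l.1 * measureM u q l = (∏' r : ℕ, (1 - u / q ^ (r + 1))) *
      weight q⁻¹ (u * x) (addColumn 0 (l.2.parts.map Nat.pred)) := by
  obtain ⟨n, l⟩ := l
  have h0 : q ≠ 0 := by positivity
  have hle : ∀ y ∈ l.parts, y < n + 1 := fun y hy => by
    have h1 := Multiset.single_le_sum (fun _ _ => Nat.zero_le _) y hy
    rw [l.parts_sum] at h1
    omega
  have e0 : addColumn 0 (l.parts.map Nat.pred) = l.parts := by
    rw [addColumn, map_succ_map_pred]
    simp
  have hc0 : l.parts.count 0 = 0 := Multiset.count_eq_zero.2 fun h => (l.parts_pos h).ne' rfl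
  have hn : ∑ i ∈ Finset.range (n + 1), i * l.parts.count i = n := by
    have := Finset.sum_multiset_count_of_subset l.parts (Finset.range (n + 1)) (fun y hy =>
      Finset.mem_range.2 (hle y (Multiset.mem_toFinset.1 hy)))
    rw [l.parts_sum] at this
    conv_rhs => rw [this]
    exact Finset.sum_congr rfl fun i _ => by simp [mul_comm]
  have hexp : 2 * ∑ i ∈ Finset.range (n + 1), ∑ h ∈ Finset.range i,
        h * l.parts.count h * l.parts.count i
      + ∑ i ∈ Finset.range (n + 1), (i - 1) * l.parts.count i ^ 2
      + ∑ i ∈ Finset.range (n + 1), l.parts.count i ^ 2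
      = expo (n + 1) fun i => l.parts.count i := by
    rw [expo, add_assoc, ← Finset.sum_add_distrib]
    congr 1
    refine Finset.sum_congr rfl fun i _ => ?_
    -- at `i = 0` the subtraction truncates, but a partition has no parts equal to zero
    rcases i with _ | i
    · simp [hc0]
    · simp only [Nat.add_sub_cancel]
      ring
  simp only [e0, weight_eq _ _ hle, wt, measureM, hn, glOrder_eq hq, Finset.prod_mul_distrib,
    Finset.prod_pow_eq_pow_sum, ← hexp]
  rw [pow_add _ _ (∑ i ∈ Finset.range (n + 1), l.parts.count i ^ 2), inv_pow, inv_pow, mul_pow]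
  have hp := (Finset.prod_pos (s := Finset.range (n + 1)) fun i _ =>
    poch_one_pos (inv_pos.2 (one_pos.trans hq)) (inv_lt_one_of_one_lt₀ hq) (l.parts.count i)).ne'
  field_simp

theorem statement0 (u q x : ℝ) (hq : 1 < q) (hu0 : 0 < u) (hu1 : u < 1) (hx : |x| ≤ 1) :
    Multipliable (fun r : ℕ => (1 - u / q ^ (r + 1)) / (1 - u * x / q ^ (r + 1))) ∧
    HasSum (fun lam : Σ n : ℕ, Nat.Partition n => x ^ lam.1 * measureM u q lam)
      (∏' r : ℕ, (1 - u / q ^ (r + 1)) / (1 - u * x / q ^ (r + 1))) := by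
  have hp0 : 0 < q⁻¹ := inv_pos.2 (one_pos.trans hq)
  have hp1 : q⁻¹ < 1 := inv_lt_one_of_one_lt₀ hq
  have hu : |u| ≤ 1 := by rw [abs_of_pos hu0]; exact hu1.le
  have ht : |u * x| < 1 := by
    rw [abs_mul, abs_of_pos hu0]
    nlinarith [abs_nonneg x]
  obtain ⟨A, -, hA, -⟩ := hasProd_poch hp0 hp1 hu
  obtain ⟨Q, hQ, hQprod, hlim⟩ := hasProd_poch hp0 hp1 ht.le
  have hdiv := hA.div₀ hQprod hQ
  simp only [inv_pow, ← div_eq_mul_inv] at hA hdiv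
  refine ⟨hdiv.multipliable, ?_⟩
  rw [hdiv.tprod_eq]
  have hall := ((Equiv.ofBijective _ pred_bijective).hasSum_iff.2
    (hasSum_all hp0 hp1 ht hQ hlim)).mul_left A
  rw [mul_one_div] at hall
  refine hall.congr_fun fun l => ?_
  rw [measureM_eq hq, hA.tprod_eq]
  rfl
end

section
/- For every real number q > 1 and every integer k ≥ 2, the sum over all partitions λ whose largest part is strictly less than k (λ_1 < k) of M_{(1,q)}(λ) equals the convergent infinite product, over all integers r ≥ 1 with r ≡ 0, k, or k+1 modulo 2k+1, of (1 − 1/q^r). -/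
/-!
Write `x = 1/q`, `(x)_m = ∏_{j ≤ m} (1 - x^j)` and `N_i = λ'_i`. Since `|GL(m,q)| = x^{-m²} (x)_m`,
the weight `M_{(1,q)}(λ)` equals `(x)_∞ x^{N_1² + N_2² + ⋯} / ∏_i (x)_{m_i(λ)}`, so the claim is the
Andrews–Gordon identity
`∑_{N_1 ≥ ⋯ ≥ N_{k-1}} x^{N_1² + ⋯ + N_{k-1}²} / ((x)_{N_1-N_2} ⋯ (x)_{N_{k-1}})
  = ∏_{r ≢ 0, ±k mod 2k+1} (1 - x^r)⁻¹`.

It is proved with the Bailey chain. Set `1/(x)_m = 0` for `m < 0`. The `q`-Vandermonde identity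
(`qvand`, hence `bailey_kernel`) shows that if `β_n = ∑_{r ∈ ℤ} α_r / ((x)_{n-r} (x)_{n+r})` then
`α'_r = x^{r²} α_r` and `β'_n = ∑_{s ≤ n} x^{s²} β_s / (x)_{n-s}` are related in the same way. The
chain starts at `β_n = δ_{n,0}`, `α_r = (-1)^r x^{r(r-1)/2}`, which is the case `z = 1` of the finite
Jacobi triple product (`finite_jtp`). After `j` steps `β` is a sum over `j`-tuples of multiplicities
(`baileyBeta_eq_sum`), and letting `n → ∞` by dominated convergence (`hasSum_baileyBeta`) turns the
sum over partitions into `∑_{r ∈ ℤ} (-1)^r x^{k r² + r(r-1)/2}`. The limit of the same finite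
triple product, with base `x^{2k+1}` and `z = x^k`, evaluates this series as the required product
(`hasProd_residues`).
-/

open scoped BigOperators

open Filter Topology

/-- The reciprocal `1/(x;x)_m`, with integer index and value `0` for `m < 0`. -/
noncomputable def qv (x : ℝ) (m : ℤ) : ℝ :=
  if 0 ≤ m then (∏ j ∈ Finset.range m.toNat, (1 - x ^ (j + 1)))⁻¹ else 0

/-- The Euler product `(x;x)_∞`. -/
noncomputable def qInf (x : ℝ) : ℝ := ∏' j : ℕ, (1 - x ^ (j + 1))

/-! ### The reciprocals of `(x;x)_m` and their limit -/

lemma hasSum_congr_of_eq {ι : Type*} {f g : ι → ℝ} {s t : ℝ} (h : HasSum f s)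
    (hf : ∀ i, g i = f i) (hs : t = s) : HasSum g t := by
  rw [funext hf, hs]; exact h

section basic
variable {x : ℝ}

lemma qv_neg {m : ℤ} (hm : m < 0) : qv x m = 0 := by simp [qv, hm]

lemma qv_zero : qv x 0 = 1 := by simp [qv]

lemma qv_natCast (n : ℕ) : qv x n = (∏ j ∈ Finset.range n, (1 - x ^ (j + 1)))⁻¹ := by
  simp [qv]

lemma factor_pos_s2 (h0 : 0 < x) (h1 : x < 1) (j : ℕ) : 0 < 1 - x ^ (j + 1) :=
  sub_pos.2 (pow_lt_one₀ h0.le h1 (Nat.succ_ne_zero j))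

lemma qprod_pos (h0 : 0 < x) (h1 : x < 1) (n : ℕ) :
    0 < ∏ j ∈ Finset.range n, (1 - x ^ (j + 1)) :=
  Finset.prod_pos fun j _ => factor_pos_s2 h0 h1 j

lemma qv_nonneg (h0 : 0 < x) (h1 : x < 1) (m : ℤ) : 0 ≤ qv x m := by
  unfold qv
  split_ifs
  · exact inv_nonneg.2 (qprod_pos h0 h1 _).le
  · exact le_rfl

/-- The recurrence for `1/(x;x)_m`, valid for every integer `m`. Both sides vanish for `m ≤ 0`, so
sums over `ℤ` can be shifted without boundary terms. -/
lemma qv_step (h0 : 0 < x) (h1 : x < 1) (m : ℤ) : (1 - x ^ m) * qv x m = qv x (m - 1) := by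
  rcases lt_trichotomy m 0 with h | rfl | h
  · rw [qv_neg h, qv_neg (by omega), mul_zero]
  · rw [qv_neg (show (0 : ℤ) - 1 < 0 by omega)]; simp
  · obtain ⟨n, rfl⟩ : ∃ n : ℕ, m = (n + 1 : ℕ) := ⟨(m - 1).toNat, by omega⟩
    rw [show ((n + 1 : ℕ) : ℤ) - 1 = (n : ℕ) by push_cast; ring, qv_natCast, qv_natCast,
      Finset.prod_range_succ, zpow_natCast, mul_inv]
    have := (factor_pos_s2 h0 h1 n).ne'
    field_simp

lemma summable_pow_succ (h0 : 0 < x) (h1 : x < 1) {ι : Type*} (f : ι → ℕ)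
    (hf : Function.Injective f) : Summable fun i => x ^ f i :=
  (summable_geometric_of_lt_one h0.le h1).comp_injective hf

lemma multipliable_pow (h0 : 0 < x) (h1 : x < 1) {ι : Type*} (f : ι → ℕ)
    (hf : Function.Injective f) : Multipliable fun i => 1 - x ^ f i := by
  have := multipliable_one_add_of_summable (f := fun i => - x ^ f i)
    (by simpa [abs_of_pos h0] using summable_pow_succ h0 h1 f hf)
  simpa [sub_eq_add_neg] using this

lemma tendsto_qprod (h0 : 0 < x) (h1 : x < 1) :
    Tendsto (fun n => ∏ j ∈ Finset.range n, (1 - x ^ (j + 1))) atTop (𝓝 (qInf x)) :=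
  (multipliable_pow h0 h1 (fun j : ℕ => j + 1) (add_left_injective 1)).hasProd.tendsto_prod_nat

lemma qInf_pos (h0 : 0 < x) (h1 : x < 1) : 0 < qInf x := by
  refine lt_of_le_of_ne ?_ (Ne.symm ?_)
  · exact ge_of_tendsto' (tendsto_qprod h0 h1) fun n => (qprod_pos h0 h1 n).le
  · have := tprod_one_add_ne_zero_of_summable (f := fun j : ℕ => - x ^ (j + 1))
      (fun i => by simpa [← sub_eq_add_neg] using (factor_pos_s2 h0 h1 i).ne')
      (by simpa [abs_of_pos h0] using
        summable_pow_succ h0 h1 (fun j : ℕ => j + 1) (add_left_injective 1))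
    simpa [qInf, sub_eq_add_neg] using this

lemma qv_le (h0 : 0 < x) (h1 : x < 1) (m : ℤ) : qv x m ≤ (qInf x)⁻¹ := by
  have hp := qInf_pos h0 h1
  unfold qv
  split_ifs
  · refine inv_anti₀ hp (Antitone.le_of_tendsto (antitone_nat_of_succ_le fun n => ?_)
      (tendsto_qprod h0 h1) _)
    rw [Finset.prod_range_succ]
    exact mul_le_of_le_one_right (qprod_pos h0 h1 n).le (by have := pow_pos h0 (n+1); linarith)
  · exact (inv_pos.2 hp).le

lemma tendsto_qv (h0 : 0 < x) (h1 : x < 1) {f : ℕ → ℤ} (hf : Tendsto f atTop atTop) :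
    Tendsto (fun n => qv x (f n)) atTop (𝓝 (qInf x)⁻¹) := by
  have h : Tendsto (qv x) atTop (𝓝 (qInf x)⁻¹) := by
    have h2 : Tendsto (fun m : ℤ => m.toNat) atTop atTop := 
      tendsto_atTop.2 fun b => (eventually_ge_atTop (b : ℤ)).mono fun m hm => by omega
    refine (((tendsto_qprod h0 h1).inv₀ (qInf_pos h0 h1).ne').comp h2).congr' ?_
    filter_upwards [eventually_ge_atTop 0] with m hm
    simp [qv, hm]
  exact h.comp hf

end basic

/-! ### The finite Jacobi triple product -/

section jtp
variable {y z : ℝ}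

/-- The general term `(-1)^r z^r y^{r(r-1)/2}` of the theta series; the integer division is exact. -/
noncomputable def theta (y z : ℝ) (r : ℤ) : ℝ := (-z) ^ r * y ^ (r * (r - 1) / 2)

lemma tri_succ (r : ℤ) : (r + 1) * (r + 1 - 1) / 2 = r + r * (r - 1) / 2 := by
  rw [show (r + 1) * (r + 1 - 1) = r * (r - 1) + r * 2 by ring,
    Int.add_mul_ediv_right _ _ (by norm_num)]
  ring

lemma theta_succ (hy : y ≠ 0) (hz : z ≠ 0) (r : ℤ) :
    theta y z (r + 1) = -z * y ^ r * theta y z r := by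
  unfold theta
  rw [tri_succ, zpow_add₀ hy, zpow_add_one₀ (neg_ne_zero.2 hz)]
  ring

/-- Finite form of the Jacobi triple product. The sum has finitely many nonzero terms, namely those
with `-a ≤ r ≤ b`. The induction on `b` splits
`1 - y^{a+b+1} = (1 - y^{b+1-r}) + y^{b+1-r} (1 - y^{a+r})` and shifts `r` in the second part; the
induction on `a` (at `b = 0`) is symmetric. -/
lemma finite_jtp (h0 : 0 < y) (h1 : y < 1) (hz : z ≠ 0) (a b : ℕ) :
    HasSum (fun r : ℤ => theta y z r * qv y (a + r) * qv y (b - r))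
      ((∏ i ∈ Finset.range a, (1 - z⁻¹ * y ^ (i + 1))) *
        (∏ i ∈ Finset.range b, (1 - z * y ^ i)) * qv y (a + b)) := by
  have hy := h0.ne'
  induction b with
  | zero =>
    induction a with
    | zero =>
      have := hasSum_single (f := fun r : ℤ => theta y z r * qv y ((0 : ℕ) + r) *
        qv y ((0 : ℕ) - r)) 0 (fun r hr => by
          rcases lt_or_gt_of_ne hr with h | h
          · rw [qv_neg (m := (0 : ℕ) + r) (by simpa using h)]; ring
          · rw [qv_neg (m := (0 : ℕ) - r) (by simpa using h)]; ring)
      simpa [theta, qv_zero] using this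
    | succ a ih =>
      have h2 := ((Equiv.addRight (1 : ℤ)).hasSum_iff.2 ih).mul_left (-z⁻¹ * y ^ (a + 1))
      have hne := (factor_pos_s2 h0 h1 a).ne'
      have h3 := (ih.add h2).mul_left (1 - y ^ (a + 1))⁻¹
      refine hasSum_congr_of_eq h3 (fun r => ?_) ?_
      · rw [eq_inv_mul_iff_mul_eq₀ hne]
        simp only [Function.comp_apply, Equiv.coe_addRight]
        rw [theta_succ hy hz]
        have e1 := qv_step h0 h1 (a + 1 + r)
        have e2 := qv_step h0 h1 (-r)
        rw [show (a : ℤ) + 1 + r - 1 = a + r by ring] at e1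
        push_cast
        rw [show ((0 : ℤ) - (r + 1)) = -r - 1 by ring, show (0 : ℤ) - r = -r by ring,
          show (a : ℤ) + (r + 1) = a + 1 + r by ring, ← e1, ← e2]
        rw [zpow_add₀ hy, zpow_add₀ hy, zpow_neg, zpow_natCast, zpow_one]
        field_simp
        ring
      · have e1 := qv_step h0 h1 (a + 1)
        rw [Finset.prod_range_succ]
        rw [eq_inv_mul_iff_mul_eq₀ hne]
        push_cast
        simp only [add_zero]
        rw [show (a : ℤ) + 1 - 1 = a by ring] at e1
        rw [← e1, zpow_add₀ hy, zpow_natCast, zpow_one]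
        ring
  | succ b ih =>
    have h2 := ((Equiv.subRight (1 : ℤ)).hasSum_iff.2 ih).mul_left (-z * y ^ b)
    have hne := (factor_pos_s2 h0 h1 (a + b)).ne'
    have h3 := (ih.add h2).mul_left (1 - y ^ (a + b + 1))⁻¹
    refine hasSum_congr_of_eq h3 (fun r => ?_) ?_
    · rw [eq_inv_mul_iff_mul_eq₀ hne]
      simp only [Function.comp_apply, Equiv.subRight_apply]
      have ht := theta_succ hy hz (r - 1)
      rw [sub_add_cancel] at ht
      rw [ht]
      have e1 := qv_step h0 h1 (b + 1 - r)
      have e2 := qv_step h0 h1 (a + r)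
      push_cast
      rw [show (b : ℤ) + 1 - r - 1 = b - r by ring] at e1
      rw [show (a : ℤ) + (r - 1) = a + r - 1 by ring, show (b : ℤ) - (r - 1) = b + 1 - r by ring,
        ← e1, ← e2]
      rw [zpow_sub₀ hy, zpow_sub₀ hy, zpow_add₀ hy, zpow_add₀ hy, zpow_natCast, zpow_natCast,
        zpow_one]
      have := (zpow_pos h0 r).ne'
      field_simp
      ring
    · have e1 := qv_step h0 h1 (a + b + 1)
      rw [Finset.prod_range_succ _ b]
      rw [eq_inv_mul_iff_mul_eq₀ hne]
      push_cast
      rw [show (a : ℤ) + b + 1 - 1 = a + b by ring] at e1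
      rw [← e1, show (a : ℤ) + b + 1 = (a + b + 1 : ℕ) by push_cast; ring, zpow_natCast,
        show (a : ℤ) + (b + 1) = (a + b + 1 : ℕ) by push_cast; ring]
      ring

end jtp

/-! ### The Bailey chain -/

section bailey
variable {x : ℝ}

/-- A limiting case of the `q`-Vandermonde identity. In the induction step,
`1 - x^{m+1} = x^t (1 - x^{m+1-t}) + (1 - x^t)` splits the sum, and after shifting `t` in the second
part the two parts recombine into the sum for `m` and `c + 1`. -/
lemma qvand (h0 : 0 < x) (h1 : x < 1) (m : ℕ) (c : ℤ) :
    HasSum (fun t : ℤ => x ^ (t * (t + c)) * qv x (m - t) * qv x t * qv x (t + c))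
      (qv x m * qv x (m + c)) := by
  have hx := h0.ne'
  induction m generalizing c with
  | zero =>
    have := hasSum_single (f := fun t : ℤ => x ^ (t * (t + c)) * qv x ((0 : ℕ) - t) * qv x t *
      qv x (t + c)) 0 (fun r hr => by
        rcases lt_or_gt_of_ne hr with h | h
        · rw [qv_neg h]; ring
        · rw [qv_neg (m := (0 : ℕ) - r) (by simpa using h)]; ring)
    simpa [qv_zero] using this
  | succ m ih =>
    have hne := (factor_pos_s2 h0 h1 m).ne'
    set h2 : ℤ → ℝ := fun t => x ^ (t * (t + c)) * qv x (m + 1 - t) * qv x (t - 1) * qv x (t + c)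
    -- `h2` is the part of the summand carrying the factor `1 - x^t`.
    have hs2 : Summable h2 := by
      refine summable_of_ne_finset_zero (s := Finset.Icc 1 (m + 1 : ℤ)) fun t ht => ?_
      simp only [Finset.mem_Icc, not_and_or, not_le] at ht
      rcases ht with h | h
      · simp only [h2, qv_neg (x := x) (show t - 1 < 0 by omega), mul_zero, zero_mul]
      · simp only [h2, qv_neg (x := x) (show (m : ℤ) + 1 - t < 0 by omega), mul_zero, zero_mul]
    have hs2' := (Equiv.addRight (1 : ℤ)).hasSum_iff.2 hs2.hasSum
    have h3 := (((ih (c + 1)).sub hs2').add hs2.hasSum).mul_left (1 - x ^ (m + 1))⁻¹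
    refine hasSum_congr_of_eq h3 (fun t => ?_) ?_
    · rw [eq_inv_mul_iff_mul_eq₀ hne]
      simp only [Function.comp_apply, Equiv.coe_addRight, h2]
      have e1 := qv_step h0 h1 (m + 1 - t)
      have e2 := qv_step h0 h1 t
      have e3 := qv_step h0 h1 (t + c + 1)
      push_cast
      rw [show (m : ℤ) + 1 - t - 1 = m - t by ring] at e1
      rw [show t + c + 1 - 1 = t + c by ring] at e3
      rw [show (m : ℤ) + 1 - (t + 1) = m - t by ring, show t + (c + 1) = t + c + 1 by ring,
        show t + 1 + c = t + c + 1 by ring, show t + 1 - 1 = t by ring, ← e3, ← e2, ← e1,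
        show t * (t + c + 1) = t * (t + c) + t by ring,
        show (t + 1) * (t + c + 1) = t * (t + c) + t + (t + c + 1) by ring]
      rw [zpow_add₀ hx (t * (t + c) + t), zpow_add₀ hx (t * (t + c)), zpow_sub₀ hx,
        show (m : ℤ) + 1 = (m + 1 : ℕ) by push_cast; ring, zpow_natCast]
      have := (zpow_pos h0 t).ne'
      field_simp
      ring
    · rw [eq_inv_mul_iff_mul_eq₀ hne]
      have e1 := qv_step h0 h1 (m + 1)
      push_cast
      rw [show (m : ℤ) + 1 - 1 = m by ring] at e1
      rw [← e1, show (m : ℤ) + 1 + c = m + (c + 1) by ring,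
        show (m : ℤ) + 1 = (m + 1 : ℕ) by push_cast; ring, zpow_natCast]
      ring

/-- The identity behind the Bailey lemma: `qvand` with `t = s - r`, `m = n - r` and `c = 2r`. -/
lemma bailey_kernel (h0 : 0 < x) (h1 : x < 1) (n : ℕ) (r : ℤ) :
    ∑ s ∈ Finset.range (n + 1), x ^ (s ^ 2) * qv x (n - s : ℤ) * (qv x (s - r) * qv x (s + r)) =
      x ^ (r ^ 2) * (qv x (n - r) * qv x (n + r)) := by
  have hx := h0.ne'
  rcases lt_or_ge (n : ℤ) r with h | h
  · rw [qv_neg (show (n : ℤ) - r < 0 by omega)]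
    rw [Finset.sum_eq_zero]
    · ring
    · intro s hs
      rw [Finset.mem_range] at hs
      rw [qv_neg (show (s : ℤ) - r < 0 by omega)]
      ring
  · obtain ⟨m, hm⟩ : ∃ m : ℕ, (n : ℤ) = r + m := ⟨((n : ℤ) - r).toNat, by omega⟩
    have H := ((Equiv.subRight r).hasSum_iff.2 (qvand h0 h1 m (2 * r))).mul_left (x ^ (r ^ 2))
    have H2 : HasSum (fun s : ℤ => x ^ (s ^ 2) * qv x (n - s) * (qv x (s - r) * qv x (s + r)))
        (x ^ (r ^ 2) * (qv x (n - r) * qv x (n + r))) := by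
      refine hasSum_congr_of_eq H (fun s => ?_) ?_
      · simp only [Function.comp_apply, Equiv.subRight_apply]
        rw [show (s - r) * (s - r + 2 * r) = s ^ 2 - r ^ 2 by ring, zpow_sub₀ hx,
          show s - r + 2 * r = s + r by ring, show (m : ℤ) - (s - r) = n - s by rw [hm]; ring]
        have := (zpow_pos h0 (r ^ 2)).ne'
        field_simp
      · rw [show (n : ℤ) - r = m by omega, show (m : ℤ) + 2 * r = n + r by omega]
    have H3 := (Function.Injective.hasSum_iff (Nat.cast_injective (R := ℤ)) (fun s hs => by
      have : s < 0 := by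
        by_contra hc
        exact hs ⟨s.toNat, by omega⟩
      rcases lt_or_ge (s - r) 0 with h | h
      · rw [qv_neg h]; ring
      · rw [qv_neg (show s + r < 0 by omega)]; ring)).2 H2
    have H4 := hasSum_sum_of_ne_finset_zero (L := .unconditional ℕ) (f := (fun s : ℤ => x ^ (s ^ 2) * qv x (n - s) *
      (qv x (s - r) * qv x (s + r))) ∘ (Nat.cast : ℕ → ℤ)) (s := Finset.range (n + 1))
      (fun s hs => by
        rw [Finset.mem_range] at hs
        simp only [Function.comp_apply]
        rw [qv_neg (show (n : ℤ) - s < 0 by omega)]; ring)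
    have H5 := H4.unique H3
    rw [← H5]
    refine Finset.sum_congr rfl fun s _ => ?_
    simp only [Function.comp_apply]
    rw [← zpow_natCast x]
    push_cast
    rfl

/-- The `β`-side of the Bailey chain after `j` steps, starting from `β_n = δ_{n,0}`. -/
noncomputable def baileyBeta (x : ℝ) : ℕ → ℕ → ℝ
  | 0, n => if n = 0 then 1 else 0
  | j + 1, n => ∑ s ∈ Finset.range (n + 1), x ^ (s ^ 2) * qv x (n - s : ℤ) * baileyBeta x j s

/-- The `α`-side of the Bailey chain after `j` steps, indexed by all integers `r`. -/
noncomputable def baileyAlpha (x : ℝ) (j : ℕ) (r : ℤ) : ℝ :=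
  (-1) ^ r * x ^ (j * r ^ 2 + r * (r - 1) / 2)

/-- The Bailey relation between `α` and `β` after `j` steps. For `j = 0` it is `finite_jtp` with
`z = 1`, whose right side contains the factor `1 - z = 0` unless `n = 0`. -/
lemma bailey_chain (h0 : 0 < x) (h1 : x < 1) (j n : ℕ) :
    HasSum (fun r : ℤ => baileyAlpha x j r * (qv x (n - r) * qv x (n + r))) (baileyBeta x j n) := by
  induction j generalizing n with
  | zero =>
    refine hasSum_congr_of_eq (finite_jtp h0 h1 one_ne_zero n n) (fun r => ?_) ?_
    · simp only [theta, baileyAlpha]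
      push_cast
      simp only [zero_mul, zero_add]
      ring
    · rcases n with _ | n
      · simp [baileyBeta, qv_zero]
      · rw [Finset.prod_range_succ' (fun i => 1 - 1 * x ^ i)]
        simp [baileyBeta]
  | succ j ih =>
    have := hasSum_sum (s := Finset.range (n + 1))
      (fun s _ => (ih s).mul_left (x ^ (s ^ 2) * qv x (n - s : ℤ)))
    refine hasSum_congr_of_eq this (fun r => ?_) rfl
    calc _ = baileyAlpha x j r * (x ^ (r ^ 2) * (qv x (n - r) * qv x (n + r))) := by
          rw [baileyAlpha, baileyAlpha]
          push_cast
          rw [show ((j : ℤ) + 1) * r ^ 2 + r * (r - 1) / 2 = j * r ^ 2 + r * (r - 1) / 2 + r ^ 2 by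
            ring, zpow_add₀ h0.ne' _ (r ^ 2)]
          ring
      _ = _ := by
          rw [← bailey_kernel h0 h1, Finset.mul_sum]
          refine Finset.sum_congr rfl fun s _ => ?_
          ring

lemma norm_baileyAlpha_le (h0 : 0 < x) (h1 : x < 1) {j : ℕ} (hj : 1 ≤ j) (r : ℤ) :
    ‖baileyAlpha x j r‖ ≤ x ^ r.natAbs := by
  rw [baileyAlpha, norm_mul, norm_zpow, norm_zpow, norm_neg, norm_one, one_zpow, one_mul,
    Real.norm_of_nonneg h0.le, ← zpow_natCast]
  refine zpow_le_zpow_right_of_le_one₀ h0 h1.le ?_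
  have e1 : 0 ≤ r * (r - 1) / 2 := by
    refine Int.ediv_nonneg ?_ (by norm_num)
    rcases le_or_gt r 0 with h | h <;> nlinarith
  have e2 : (r.natAbs : ℤ) ≤ r ^ 2 := by
    rw [← Int.natAbs_sq r]
    exact_mod_cast Nat.le_self_pow two_ne_zero _
  have : r ^ 2 ≤ j * r ^ 2 := le_mul_of_one_le_left (sq_nonneg r) (by exact_mod_cast hj)
  linarith

lemma summable_pow_natAbs (h0 : 0 < x) (h1 : x < 1) : Summable fun r : ℤ => x ^ r.natAbs := by
  have h := summable_geometric_of_lt_one h0.le h1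
  exact Summable.of_nat_of_neg (by simpa using h) (by simpa using h)

lemma qv_mul_le (h0 : 0 < x) (h1 : x < 1) (a b : ℤ) :
    ‖qv x a * qv x b‖ ≤ (qInf x)⁻¹ * (qInf x)⁻¹ := by
  rw [Real.norm_of_nonneg (mul_nonneg (qv_nonneg h0 h1 _) (qv_nonneg h0 h1 _))]
  exact mul_le_mul (qv_le h0 h1 _) (qv_le h0 h1 _) (qv_nonneg h0 h1 _)
    (inv_pos.2 (qInf_pos h0 h1)).le

lemma tendsto_tsum_qv (h0 : 0 < x) (h1 : x < 1) (f : ℤ → ℝ) (b : ℤ → ℝ)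
    (hb : Summable b) (hfb : ∀ i, ‖f i‖ ≤ b i) :
    Tendsto (fun n : ℕ => ∑' r : ℤ, f r * (qv x (n - r) * qv x (n + r))) atTop
      (𝓝 ((∑' r, f r) * ((qInf x)⁻¹ * (qInf x)⁻¹))) := by
  rw [← tsum_mul_right]
  refine tendsto_tsum_of_dominated_convergence
    (bound := fun r => b r * ((qInf x)⁻¹ * (qInf x)⁻¹)) (hb.mul_right _) (fun r => ?_)
    (Eventually.of_forall fun n r => ?_)
  · refine ((tendsto_qv h0 h1 ?_).mul (tendsto_qv h0 h1 ?_)).const_mul _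
    · exact tendsto_atTop_add_const_right _ (-r) tendsto_natCast_atTop_atTop
    · exact tendsto_atTop_add_const_right _ r tendsto_natCast_atTop_atTop
  · rw [norm_mul]
    exact mul_le_mul (hfb r) (qv_mul_le h0 h1 _ _) (norm_nonneg _) ((norm_nonneg _).trans (hfb r))

lemma baileyBeta_nonneg (h0 : 0 < x) (h1 : x < 1) (j n : ℕ) : 0 ≤ baileyBeta x j n := by
  induction j generalizing n with
  | zero => rw [baileyBeta]; split_ifs <;> norm_num
  | succ j ih =>
    exact Finset.sum_nonneg fun s _ => mul_nonneg (mul_nonneg (pow_pos h0 _).le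
      (qv_nonneg h0 h1 _)) (ih s)

lemma baileyBeta_bdd (h0 : 0 < x) (h1 : x < 1) {j : ℕ} (hj : 1 ≤ j) :
    ∃ B, ∀ n, ‖baileyBeta x j n‖ ≤ B := by
  refine ⟨∑' r : ℤ, x ^ r.natAbs * ((qInf x)⁻¹ * (qInf x)⁻¹), fun n => ?_⟩
  rw [← (bailey_chain h0 h1 j n).tsum_eq]
  refine tsum_of_norm_bounded ((summable_pow_natAbs h0 h1).mul_right _).hasSum fun r => ?_
  rw [norm_mul]
  exact mul_le_mul (norm_baileyAlpha_le h0 h1 hj r) (qv_mul_le h0 h1 _ _) (norm_nonneg _)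
    (pow_pos h0 _).le

/-- The limit `n → ∞` of step `j + 1` of the chain, where both sides of `bailey_chain` converge by
dominated convergence. -/
lemma hasSum_baileyBeta (h0 : 0 < x) (h1 : x < 1) {j : ℕ} (hj : 1 ≤ j) :
    HasSum (fun s : ℕ => x ^ (s ^ 2) * baileyBeta x j s)
      ((qInf x)⁻¹ * ∑' r, baileyAlpha x (j + 1) r) := by
  obtain ⟨B, hB⟩ := baileyBeta_bdd h0 h1 hj
  have hp := qInf_pos h0 h1
  have hbs : Summable fun s : ℕ => x ^ s * B :=
    (summable_geometric_of_lt_one h0.le h1).mul_right _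
  have hle : ∀ s : ℕ, ‖x ^ (s ^ 2) * baileyBeta x j s‖ ≤ x ^ s * B := fun s => by
    rw [norm_mul, Real.norm_of_nonneg (pow_pos h0 _).le]
    exact mul_le_mul (pow_le_pow_of_le_one h0.le h1.le (Nat.le_self_pow two_ne_zero s)) (hB s)
      (norm_nonneg _) (pow_pos h0 _).le
  have hS : Summable fun s : ℕ => x ^ (s ^ 2) * baileyBeta x j s :=
    Summable.of_norm_bounded hbs hle
  have hL : Tendsto (fun n => baileyBeta x (j + 1) n) atTop
      (𝓝 (∑' s : ℕ, (qInf x)⁻¹ * (x ^ (s ^ 2) * baileyBeta x j s))) := by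
    have : ∀ n : ℕ, baileyBeta x (j + 1) n =
        ∑' s : ℕ, qv x (n - s : ℤ) * (x ^ (s ^ 2) * baileyBeta x j s) := fun n => by
      rw [tsum_eq_sum (s := Finset.range (n + 1)), baileyBeta]
      · exact Finset.sum_congr rfl fun s _ => by ring
      · intro s hs
        rw [Finset.mem_range] at hs
        rw [qv_neg (show (n : ℤ) - s < 0 by omega), zero_mul]
    simp_rw [this]
    refine tendsto_tsum_of_dominated_convergence
      (bound := fun s => (qInf x)⁻¹ * (x ^ s * B)) (hbs.mul_left _) (fun s => ?_)
      (Eventually.of_forall fun n s => ?_)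
    · refine (tendsto_qv h0 h1 ?_).mul_const _
      exact tendsto_atTop_add_const_right _ (-(s : ℤ)) tendsto_natCast_atTop_atTop
    · rw [norm_mul]
      refine mul_le_mul ?_ (hle s) (norm_nonneg _) (inv_pos.2 hp).le
      rw [Real.norm_of_nonneg (qv_nonneg h0 h1 _)]
      exact qv_le h0 h1 _
  have hR := tendsto_tsum_qv h0 h1 (baileyAlpha x (j + 1)) (fun r => x ^ r.natAbs)
    (summable_pow_natAbs h0 h1) (norm_baileyAlpha_le h0 h1 (by omega))
  simp_rw [(bailey_chain h0 h1 (j + 1) _).tsum_eq] at hR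
  have := tendsto_nhds_unique hL hR
  rw [tsum_mul_left] at this
  have e : ∑' s : ℕ, x ^ (s ^ 2) * baileyBeta x j s =
      (qInf x)⁻¹ * ∑' r, baileyAlpha x (j + 1) r := by
    have hne := (inv_pos.2 hp).ne'
    refine mul_left_cancel₀ hne (this.trans ?_)
    ring
  rw [← e]
  exact hS.hasSum

end bailey

/-! ### The theta series as a product over residue classes -/

section product
variable {x : ℝ}

/-- The chain's `α` is a theta term because `k r² + t = k r + (2k+1) t` for `t = r(r-1)/2`. -/
lemma baileyAlpha_eq_theta (h0 : 0 < x) (k : ℕ) (r : ℤ) :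
    baileyAlpha x k r = theta (x ^ (2 * k + 1)) (x ^ k) r := by
  have hx := h0.ne'
  rw [baileyAlpha, theta, neg_eq_neg_one_mul (x ^ k), mul_zpow, mul_assoc, ← zpow_natCast, ← zpow_natCast,
    ← zpow_mul, ← zpow_mul, ← zpow_add₀ hx]
  congr 2
  obtain ⟨t, ht⟩ : ∃ t, r * (r - 1) = 2 * t := by
    rcases Int.even_or_odd' r with ⟨c, rfl | rfl⟩
    · exact ⟨c * (2 * c - 1), by ring⟩
    · exact ⟨c * (2 * c + 1), by ring⟩
  rw [ht, Int.mul_ediv_cancel_left _ two_ne_zero]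
  push_cast
  linear_combination k * ht

/-- Enumeration of the integers `r ≥ 1` with `r ≡ k+1`, `k` or `0` modulo `2k+1`, one copy of `ℕ` for
each residue class. -/
def residueMap (k : ℕ) (hk : 2 ≤ k) : (ℕ ⊕ ℕ) ⊕ ℕ → {r : ℕ // 1 ≤ r ∧
    (r % (2 * k + 1) = 0 ∨ r % (2 * k + 1) = k ∨ r % (2 * k + 1) = k + 1)}
  | .inl (.inl i) => ⟨(2 * k + 1) * i + (k + 1), by omega, by
      rw [Nat.mul_add_mod, Nat.mod_eq_of_lt (by omega)]; simp⟩
  | .inl (.inr i) => ⟨(2 * k + 1) * i + k, by omega, by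
      rw [Nat.mul_add_mod, Nat.mod_eq_of_lt (by omega)]; simp⟩
  | .inr i => ⟨(2 * k + 1) * (i + 1) + 0, by nlinarith, by simp⟩

lemma residueMap_bijective (k : ℕ) (hk : 2 ≤ k) : Function.Bijective (residueMap k hk) := by
  have hM : 0 < 2 * k + 1 := by omega
  have key : ∀ a b i j : ℕ, a < 2 * k + 1 → b < 2 * k + 1 →
      (2 * k + 1) * i + a = (2 * k + 1) * j + b → i = j ∧ a = b := by
    intro a b i j ha hb h
    have h1 := congrArg (· % (2 * k + 1)) h
    have h2 := congrArg (· / (2 * k + 1)) h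
    simp only [Nat.mul_add_mod, Nat.mod_eq_of_lt ha, Nat.mod_eq_of_lt hb] at h1
    simp only [Nat.mul_add_div hM, Nat.div_eq_of_lt ha, Nat.div_eq_of_lt hb] at h2
    omega
  constructor
  · rintro ((i | i) | i) ((j | j) | j) h <;> replace h := congrArg Subtype.val h <;>
      simp only [residueMap] at h
    · simp [(key _ _ _ _ (by omega) (by omega) h).1]
    · have := (key _ _ _ _ (by omega) (by omega) h).2; omega
    · have := (key _ 0 _ _ (by omega) (by omega) h).2; omega
    · have := (key _ _ _ _ (by omega) (by omega) h).2; omega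
    · simp [(key _ _ _ _ (by omega) (by omega) h).1]
    · have := (key _ 0 _ _ (by omega) (by omega) h).2; omega
    · have := (key 0 _ _ _ (by omega) (by omega) h).2; omega
    · have := (key 0 _ _ _ (by omega) (by omega) h).2; omega
    · have := (key 0 0 _ _ (by omega) (by omega) h).1
      simp only [Sum.inr.injEq]; omega
  · rintro ⟨r, hr, h⟩
    have hd := Nat.div_add_mod r (2 * k + 1)
    rcases h with h | h | h <;> rw [h] at hd
    · refine ⟨.inr (r / (2 * k + 1) - 1), Subtype.ext ?_⟩
      have : r / (2 * k + 1) ≠ 0 := by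
        intro h0; rw [h0] at hd; omega
      simp only [residueMap]
      rw [Nat.sub_add_cancel (Nat.pos_of_ne_zero this)]
      exact hd
    · exact ⟨.inl (.inr (r / (2 * k + 1))), Subtype.ext hd⟩
    · exact ⟨.inl (.inl (r / (2 * k + 1))), Subtype.ext hd⟩

/-- The Jacobi triple product with base `x^{2k+1}` and `z = x^k`, as the limit of `finite_jtp`. -/
lemma hasProd_residues (h0 : 0 < x) (h1 : x < 1) (k : ℕ) (hk : 2 ≤ k) :
    HasProd (fun r : {r : ℕ // 1 ≤ r ∧
        (r % (2 * k + 1) = 0 ∨ r % (2 * k + 1) = k ∨ r % (2 * k + 1) = k + 1)} => 1 - x ^ r.1)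
      (∑' r, baileyAlpha x k r) := by
  have hy0 : 0 < x ^ (2 * k + 1) := pow_pos h0 _
  have hy1 : x ^ (2 * k + 1) < 1 := pow_lt_one₀ h0.le h1 (by omega)
  have hz : x ^ k ≠ 0 := (pow_pos h0 _).ne'
  set y := x ^ (2 * k + 1) with hy
  have hinj : ∀ c, Function.Injective fun i : ℕ => (2 * k + 1) * i + c := fun c i j h => by
    have : (2 * k + 1) * i = (2 * k + 1) * j := by simpa using h
    exact Nat.eq_of_mul_eq_mul_left (by omega) this
  have mA := multipliable_pow h0 h1 _ (hinj (k + 1))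
  have mB := multipliable_pow h0 h1 _ (hinj k)
  have mC := multipliable_pow hy0 hy1 (fun i : ℕ => i + 1) (add_left_injective 1)
  have hlim : Tendsto (fun n : ℕ => ∑' r : ℤ, theta y (x ^ k) r * (qv y (n - r) * qv y (n + r)))
      atTop (𝓝 ((∏' i : ℕ, (1 - x ^ ((2 * k + 1) * i + (k + 1)))) *
        (∏' i : ℕ, (1 - x ^ ((2 * k + 1) * i + k))) * (qInf y)⁻¹)) := by
    have e : ∀ n : ℕ, ∑' r : ℤ, theta y (x ^ k) r * (qv y (n - r) * qv y (n + r)) =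
        (∏ i ∈ Finset.range n, (1 - x ^ ((2 * k + 1) * i + (k + 1)))) *
        (∏ i ∈ Finset.range n, (1 - x ^ ((2 * k + 1) * i + k))) * qv y (n + n) := fun n => by
      have := finite_jtp hy0 hy1 hz n n
      refine (hasSum_congr_of_eq this (fun r => by ring) ?_).tsum_eq
      congr 2
      · refine Finset.prod_congr rfl fun i _ => ?_
        rw [hy, ← pow_mul, show (2 * k + 1) * (i + 1) = (2 * k + 1) * i + (k + 1) + k by ring,
          pow_add _ _ k]
        field_simp
      · refine Finset.prod_congr rfl fun i _ => ?_
        rw [hy, ← pow_mul, pow_add]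
        ring
    simp_rw [e]
    refine (mA.hasProd.tendsto_prod_nat.mul mB.hasProd.tendsto_prod_nat).mul
      (tendsto_qv hy0 hy1 ?_)
    exact (tendsto_natCast_atTop_atTop).atTop_add_atTop tendsto_natCast_atTop_atTop
  have hlim2 := tendsto_tsum_qv hy0 hy1 (theta y (x ^ k)) (fun r => x ^ r.natAbs)
    (summable_pow_natAbs h0 h1) (fun r => by
      rw [← baileyAlpha_eq_theta h0]; exact norm_baileyAlpha_le h0 h1 (by omega) r)
  have hu := tendsto_nhds_unique hlim hlim2
  have hp := (qInf_pos hy0 hy1).ne'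
  have hval : ∑' r, baileyAlpha x k r = (∏' i : ℕ, (1 - x ^ ((2 * k + 1) * i + (k + 1)))) *
        (∏' i : ℕ, (1 - x ^ ((2 * k + 1) * i + k))) * qInf y := by
    simp_rw [baileyAlpha_eq_theta h0]
    rw [← hy]
    field_simp at hu
    rw [← hu]
  rw [hval]
  have hb := residueMap_bijective k hk
  rw [← (Equiv.ofBijective _ hb).hasProd_iff]
  refine HasProd.sum (HasProd.sum ?_ ?_) ?_
  · exact mA.hasProd
  · exact mB.hasProd
  · have := mC.hasProd
    simp only [hy, ← pow_mul] at this
    simpa [Function.comp_def, residueMap, qInf, hy, ← pow_mul] using this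

end product

/-! ### Partitions as tuples of multiplicities -/

section partitions
variable {x : ℝ}

/-- The exponent `N_1² + ⋯ + N_{j-1}²` with `N_i = m_i + ⋯ + m_{j-1}`, for a tuple indexed from `0`.
The full sum `N_0 = m_0 + ⋯ + m_{j-1}` is not included. -/
def tupleExp : (j : ℕ) → (Fin j → ℕ) → ℕ
  | 0, _ => 0
  | j + 1, m => tupleExp j (Fin.tail m) + (∑ i, Fin.tail m i) ^ 2

/-- Unfolding the recursion of `baileyBeta`: the step from `s` to `n` prepends the entry `n - s` to a
tuple of sum `s`. -/
lemma baileyBeta_eq_sum (j n : ℕ) :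
    baileyBeta x j n = ∑ m ∈ Finset.Nat.antidiagonalTuple j n,
      x ^ tupleExp j m * ∏ i, qv x (m i) := by
  induction j generalizing n with
  | zero =>
    rcases n with _ | n
    · simp [baileyBeta, tupleExp]
    · simp [baileyBeta]
  | succ j ih =>
    simp only [baileyBeta, ih, Finset.mul_sum]
    rw [Finset.sum_sigma']
    refine Finset.sum_nbij' (fun p => (Fin.cons (n - p.1) p.2 : Fin (j + 1) → ℕ))
      (fun m => ⟨∑ i, Fin.tail m i, Fin.tail m⟩) ?_ ?_ ?_ ?_ ?_
    · rintro ⟨s, m⟩ h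
      simp only [Finset.mem_sigma, Finset.mem_range, Finset.Nat.mem_antidiagonalTuple] at h
      simp only [Finset.Nat.mem_antidiagonalTuple, Fin.sum_univ_succ, Fin.cons_zero, Fin.cons_succ]
      omega
    · intro m h
      simp only [Finset.Nat.mem_antidiagonalTuple, Fin.sum_univ_succ] at h
      simp only [Finset.mem_sigma, Finset.mem_range, Finset.Nat.mem_antidiagonalTuple, Fin.tail]
      exact ⟨by omega, trivial⟩
    · rintro ⟨s, m⟩ h
      simp only [Finset.mem_sigma, Finset.mem_range, Finset.Nat.mem_antidiagonalTuple] at h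
      simp [Fin.tail_cons, h.2]
    · intro m h
      simp only [Finset.Nat.mem_antidiagonalTuple, Fin.sum_univ_succ] at h
      simp only [Fin.tail]
      rw [show n - ∑ i : Fin j, m i.succ = m 0 by omega]
      exact Fin.cons_self_tail m
    · rintro ⟨s, m⟩ h
      simp only [Finset.mem_sigma, Finset.mem_range, Finset.Nat.mem_antidiagonalTuple] at h
      simp only [tupleExp, Fin.tail_cons, Fin.prod_univ_succ, Fin.cons_zero, Fin.cons_succ, h.2]
      rw [Nat.cast_sub (by omega), pow_add]
      ring

lemma hasSum_tuples (h0 : 0 < x) (h1 : x < 1) {j : ℕ} (hj : 1 ≤ j) :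
    HasSum (fun m : Fin j → ℕ => x ^ ((∑ i, m i) ^ 2) * (x ^ tupleExp j m * ∏ i, qv x (m i)))
      ((qInf x)⁻¹ * ∑' r, baileyAlpha x (j + 1) r) := by
  have H := hasSum_baileyBeta h0 h1 hj
  rw [← (Finset.Nat.sigmaAntidiagonalTupleEquivTuple j).hasSum_iff]
  set F : (Fin j → ℕ) → ℝ :=
    fun m => x ^ ((∑ i, m i) ^ 2) * (x ^ tupleExp j m * ∏ i, qv x (m i))
  have hF : ∀ m, 0 ≤ F m := fun m => mul_nonneg (pow_pos h0 _).le
    (mul_nonneg (pow_pos h0 _).le (Finset.prod_nonneg fun i _ => qv_nonneg h0 h1 _))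
  have hfib : ∀ n, ∑ m : Finset.Nat.antidiagonalTuple j n, F m =
      x ^ (n ^ 2) * baileyBeta x j n := fun n => by
    rw [Finset.sum_coe_sort _ F, baileyBeta_eq_sum, Finset.mul_sum]
    refine Finset.sum_congr rfl fun m hm => ?_
    rw [Finset.Nat.mem_antidiagonalTuple] at hm
    simp only [F, hm]
  have hS : Summable (F ∘ Finset.Nat.sigmaAntidiagonalTupleEquivTuple j) := by
    refine (summable_sigma_of_nonneg fun p => hF _).2 ?_
    refine ⟨fun n => (hasSum_fintype _).summable, ?_⟩
    refine H.summable.congr fun n => ?_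
    rw [tsum_fintype, ← hfib]
    rfl
  have hT := hS.hasSum.sigma (fun n => hasSum_fintype _)
  have hT' := hasSum_congr_of_eq hT (g := fun n => x ^ (n ^ 2) * baileyBeta x j n)
    (fun n => (hfib n).symm) rfl
  rw [H.unique hT']
  exact hS.hasSum

/-- The exponent in terms of multiplicities, as in the definition of `measureM`. -/
lemma tupleExp_eq (L : ℕ) (c : ℕ → ℕ) :
    tupleExp L (fun i : Fin L => c i) =
      2 * ∑ i ∈ Finset.range L, ∑ h ∈ Finset.range i, h * c h * c i +
        ∑ i ∈ Finset.range L, i * c i ^ 2 := by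
  induction L generalizing c with
  | zero => simp [tupleExp]
  | succ L ih =>
    have e : Fin.tail (fun i : Fin (L + 1) => c i) = fun i : Fin L => c (i + 1) := by
      funext i; simp [Fin.tail]
    rw [tupleExp, e, ih (fun i => c (i + 1)), Finset.sum_range_succ', Finset.sum_range_succ' _ L,
      Fin.sum_univ_eq_sum_range (fun i => c (i + 1)) L]
    simp only [Finset.sum_range_succ' _ (_ : ℕ), zero_mul, add_zero, Finset.sum_range_zero]
    have sq : ∀ M : ℕ, (∑ i ∈ Finset.range M, c (i + 1)) ^ 2 =
        2 * ∑ i ∈ Finset.range M, ∑ h ∈ Finset.range i, c (h + 1) * c (i + 1) +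
          ∑ i ∈ Finset.range M, c (i + 1) ^ 2 := by
      intro M
      induction M with
      | zero => simp
      | succ M ihM =>
        rw [Finset.sum_range_succ, add_sq, ihM, Finset.sum_range_succ _ M,
          Finset.sum_range_succ _ M, ← Finset.sum_mul]
        ring
    rw [sq]
    simp only [add_mul, Finset.sum_add_distrib, one_mul]
    ring

lemma inv_glOrder {q : ℝ} (hq : 1 < q) (m : ℕ) :
    (glOrder q m)⁻¹ = q⁻¹ ^ (m ^ 2) * qv q⁻¹ m := by
  have h0 : 0 < q := by linarith
  rw [qv_natCast, glOrder, inv_pow, ← mul_inv]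
  congr 1
  have e : ∀ j : ℕ, q ^ (j + 1) - 1 = q ^ (j + 1) * (1 - q⁻¹ ^ (j + 1)) := fun j => by
    rw [inv_pow]
    field_simp
  simp_rw [e]
  rw [Finset.prod_mul_distrib, Finset.prod_pow_eq_pow_sum, ← mul_assoc, ← pow_add]
  congr 2
  have h1 := Finset.sum_range_id_mul_two m
  have h2 : ∑ i ∈ Finset.range m, (i + 1) = ∑ i ∈ Finset.range m, i + m := by
    simp [Finset.sum_add_distrib]
  rw [h2, ← Finset.sum_range_id]
  rcases m with _ | m
  · simp
  · rw [Nat.add_sub_cancel] at h1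
    nlinarith

/-- The weight of a partition with parts at most `j`, in terms of the multiplicities of
`1, …, j`. -/
lemma measureM_eq_s2 {q : ℝ} (hq : 1 < q) (j : ℕ) (lam : Σ n : ℕ, Nat.Partition n)
    (hl : ∀ p ∈ lam.2.parts, p < j + 1) :
    measureM 1 q lam = qInf q⁻¹ *
      (q⁻¹ ^ ((∑ i : Fin j, lam.2.parts.count (i + 1 : ℕ)) ^ 2) *
        (q⁻¹ ^ tupleExp j (fun i => lam.2.parts.count (i + 1 : ℕ)) *
          ∏ i : Fin j, qv q⁻¹ (lam.2.parts.count (i + 1 : ℕ)))) := by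
  have h0 : 0 < q := by linarith
  obtain ⟨n, p⟩ := lam
  simp only at hl ⊢
  set c : ℕ → ℕ := fun i => p.parts.count i with hc
  -- The ranges `i ≤ n` and `i ≤ j` both contain the support of `c`.
  have c0 : c 0 = 0 := Multiset.count_eq_zero.2 fun h => lt_irrefl _ (p.parts_pos h)
  have cn : ∀ i ≥ n + 1, c i = 0 := fun i hi => Multiset.count_eq_zero.2 fun h => by
    have := Multiset.le_sum_of_mem h
    rw [p.parts_sum] at this
    omega
  have ck : ∀ i ≥ j + 1, c i = 0 := fun i hi => Multiset.count_eq_zero.2 fun h => by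
    have := hl i h
    omega
  have hsum : ∀ f : ℕ → ℕ, (∀ i, c i = 0 → f i = 0) →
      ∑ i ∈ Finset.range (n + 1), f i = ∑ i ∈ Finset.range (j + 1), f i := fun f hf => by
    rw [← Finset.eventually_constant_sum (fun i hi => hf i (cn i hi)) (le_max_left _ (j + 1)),
      ← Finset.eventually_constant_sum (fun i hi => hf i (ck i hi)) (le_max_right (n + 1) _)]
  have hprod : ∏ i ∈ Finset.range (n + 1), qv q⁻¹ (c i) =
      ∏ i ∈ Finset.range (j + 1), qv q⁻¹ (c i) := by
    have hf : ∀ i, c i = 0 → qv q⁻¹ (c i) = 1 := fun i hi => by rw [hi]; exact qv_zero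
    rw [← Finset.eventually_constant_prod (fun i hi => hf i (cn i hi)) (le_max_left _ (j + 1)),
      ← Finset.eventually_constant_prod (fun i hi => hf i (ck i hi)) (le_max_right (n + 1) _)]
  have hexp : 2 * ∑ i ∈ Finset.range (n + 1), ∑ h ∈ Finset.range i, h * c h * c i
        + ∑ i ∈ Finset.range (n + 1), (i - 1) * c i ^ 2 + ∑ i ∈ Finset.range (n + 1), c i ^ 2 =
      (∑ i : Fin j, c (i + 1)) ^ 2 + tupleExp j (fun i => c (i + 1)) := by
    have e1 : tupleExp (j + 1) (fun i : Fin (j + 1) => c i) =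
        (∑ i : Fin j, c (i + 1)) ^ 2 + tupleExp j (fun i => c (i + 1)) := by
      have e2 : Fin.tail (fun i : Fin (j + 1) => c i) = fun i : Fin j => c (i + 1) := by
        funext i; simp [Fin.tail]
      rw [tupleExp, add_comm, e2]
    rw [← e1, tupleExp_eq, add_assoc, ← Finset.sum_add_distrib,
      ← hsum (fun i => ∑ h ∈ Finset.range i, h * c h * c i) (fun i hi => by simp [hi]),
      ← hsum (fun i => i * c i ^ 2) (fun i hi => by simp [hi])]
    congr 1
    refine Finset.sum_congr rfl fun i _ => ?_
    -- The truncated `i - 1` at `i = 0` is harmless because `c 0 = 0`.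
    rcases i with _ | i
    · simp [c0]
    · rw [Nat.add_sub_cancel]; ring
  have hP : ∏ i ∈ Finset.range (j + 1), qv q⁻¹ (c i) = ∏ i : Fin j, qv q⁻¹ (c (i + 1)) := by
    rw [Finset.prod_range_succ', c0, Nat.cast_zero, qv_zero, mul_one,
      Finset.prod_range (fun i => qv q⁻¹ (c (i + 1)))]
  have hI : ∏' r : ℕ, (1 - 1 / q ^ (r + 1)) = qInf q⁻¹ := by
    simp [qInf]
  change (∏' r : ℕ, (1 - 1 / q ^ (r + 1))) * 1 ^ n /
    (q ^ (2 * ∑ i ∈ Finset.range (n + 1), ∑ h ∈ Finset.range i, h * c h * c i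
        + ∑ i ∈ Finset.range (n + 1), (i - 1) * c i ^ 2) *
      ∏ i ∈ Finset.range (n + 1), glOrder q (c i)) = qInf q⁻¹ *
      (q⁻¹ ^ ((∑ i : Fin j, c (i + 1)) ^ 2) *
        (q⁻¹ ^ tupleExp j (fun i => c (i + 1)) * ∏ i : Fin j, qv q⁻¹ (c (i + 1))))
  rw [hI, one_pow, mul_one, div_eq_mul_inv, mul_inv, ← Finset.prod_inv_distrib]
  simp_rw [inv_glOrder hq]
  rw [Finset.prod_mul_distrib, Finset.prod_pow_eq_pow_sum, hprod, hP, ← inv_pow, ← mul_assoc,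
    ← mul_assoc, mul_assoc (qInf q⁻¹), ← pow_add, hexp, pow_add]
  ring

/-- A partition with all parts at most `j` is determined by its multiplicities of `1, …, j`, which
are arbitrary. -/
lemma counts_bijective (j : ℕ) : Function.Bijective
    (fun (lam : {lam : Σ n : ℕ, Nat.Partition n // ∀ p ∈ lam.2.parts, p < j + 1}) (i : Fin j) =>
      lam.1.2.parts.count (i + 1 : ℕ)) := by
  constructor
  · rintro ⟨⟨n, p⟩, hp⟩ ⟨⟨n', p'⟩, hp'⟩ h
    simp only at hp hp' h
    have hparts : p.parts = p'.parts := by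
      refine Multiset.ext.2 fun a => ?_
      by_cases ha : 1 ≤ a ∧ a < j + 1
      · have := congrFun h ⟨a - 1, by omega⟩
        simpa [Nat.sub_add_cancel ha.1] using this
      · rw [Multiset.count_eq_zero.2 fun h => ha ⟨p.parts_pos h, hp a h⟩,
          Multiset.count_eq_zero.2 fun h => ha ⟨p'.parts_pos h, hp' a h⟩]
    have hn : n = n' := by rw [← p.parts_sum, hparts, p'.parts_sum]
    subst hn
    have := Nat.Partition.ext hparts
    subst this
    rfl
  · intro m
    set s : Multiset ℕ := ∑ i : Fin j, Multiset.replicate (m i) (i + 1 : ℕ) with hs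
    have hmem : ∀ a ∈ s, ∃ i : Fin j, a = i + 1 := fun a ha => by
      rw [hs, Multiset.mem_sum] at ha
      obtain ⟨i, _, hi⟩ := ha
      exact ⟨i, Multiset.eq_of_mem_replicate hi⟩
    refine ⟨⟨⟨s.sum, ⟨s, fun {a} ha => ?_, rfl⟩⟩, fun a ha => ?_⟩, ?_⟩
    · obtain ⟨i, rfl⟩ := hmem a ha
      omega
    · obtain ⟨i, rfl⟩ := hmem a ha
      omega
    · funext i
      simp only [hs]
      rw [Multiset.count_sum']
      simp [Multiset.count_replicate, ← Fin.ext_iff]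

end partitions

theorem statement2 (q : ℝ) (hq : 1 < q) (k : ℕ) (hk : 2 ≤ k) :
    Multipliable (fun r : {r : ℕ // 1 ≤ r ∧
        (r % (2 * k + 1) = 0 ∨ r % (2 * k + 1) = k ∨ r % (2 * k + 1) = k + 1)} =>
      (1 - 1 / q ^ r.1)) ∧
    HasSum (fun lam : {lam : Σ n : ℕ, Nat.Partition n // ∀ p ∈ lam.2.parts, p < k} =>
        measureM 1 q lam.1)
      (∏' r : {r : ℕ // 1 ≤ r ∧
          (r % (2 * k + 1) = 0 ∨ r % (2 * k + 1) = k ∨ r % (2 * k + 1) = k + 1)},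
        (1 - 1 / q ^ r.1)) := by
  have h0 : 0 < q⁻¹ := inv_pos.2 (by linarith)
  have h1 : q⁻¹ < 1 := inv_lt_one_of_one_lt₀ hq
  have hP := hasProd_residues h0 h1 k hk
  have e : ∀ r : ℕ, 1 - 1 / q ^ r = 1 - q⁻¹ ^ r := fun r => by rw [one_div, inv_pow]
  simp_rw [e]
  refine ⟨hP.multipliable, ?_⟩
  rw [hP.tprod_eq]
  obtain ⟨j, rfl⟩ : ∃ j, k = j + 1 := ⟨k - 1, by omega⟩
  have hT := (hasSum_tuples h0 h1 (show 1 ≤ j by omega)).mul_left (qInf q⁻¹)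
  rw [mul_inv_cancel_left₀ (qInf_pos h0 h1).ne',
    ← (Equiv.ofBijective _ (counts_bijective j)).hasSum_iff] at hT
  exact hasSum_congr_of_eq hT (fun lam => measureM_eq_s2 hq j lam.1 lam.2) rfl
end
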